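/- arXiv:2306.15293 — 2 statements merged into one kernel-verified Lean document; each statement's English description precedes it below -/
import Mathlib

section
/- Let n ≥ 2, let m > 2, and let K₁, …, K_m ⊆ ℝⁿ be convex bodies. Then vol((∂K₁ + ⋯ + ∂K_m)/m) = (vol(K₁)·⋯·vol(K_m))^{1/m} holds if and only if K₁, …, K_m are all translates of one another. -/
open MeasureTheory Pointwise

namespace ConvexBoundary

open ENNReal Set Filter Topology

theorem ennreal_geom_mean_le_arith_mean {p q : ℝ} (hp : 0 < p) (hq : 0 < q) (hpq : p + q = 1)
    (a b : ℝ≥0∞) : a ^ p * b ^ q ≤ ENNReal.ofReal p * a + ENNReal.ofReal q * b := by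
  rcases eq_or_ne a ⊤ with rfl | ha
  · simp [ENNReal.mul_top, hp]
  rcases eq_or_ne b ⊤ with rfl | hb
  · simp [ENNReal.mul_top, hq]
  lift a to NNReal using ha
  lift b to NNReal using hb
  have h := NNReal.geom_mean_le_arith_mean2_weighted (NNReal.mk p hp.le) (NNReal.mk q hq.le) a b
    (NNReal.eq hpq)
  have e1 : ENNReal.ofReal p = ((NNReal.mk p hp.le : NNReal) : ℝ≥0∞) := ENNReal.ofReal_eq_coe_nnreal hp.le
  have e2 : ENNReal.ofReal q = ((NNReal.mk q hq.le : NNReal) : ℝ≥0∞) := ENNReal.ofReal_eq_coe_nnreal hq.le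
  rw [e1, e2, ← ENNReal.coe_rpow_of_nonneg _ hp.le, ← ENNReal.coe_rpow_of_nonneg _ hq.le]
  exact_mod_cast h

theorem volume_add_le_of_isCompact_real {A B : Set ℝ} (hA : IsCompact A) (hB : IsCompact B)
    (hA' : A.Nonempty) (hB' : B.Nonempty) : volume A + volume B ≤ volume (A + B) := by
  obtain ⟨a, ha, hmax⟩ := hA.exists_isGreatest hA'
  obtain ⟨b, hb, hmin⟩ := hB.exists_isLeast hB'
  have h1 : volume ((fun x => x + b) '' A) = volume A := by
    simp [Set.image_add_right]
  have h2 : volume ((fun x => a + x) '' B) = volume B := by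
    simp [Set.image_add_left]
  have hdis : AEDisjoint volume ((fun x => x + b) '' A) ((fun x => a + x) '' B) := by
    refine measure_mono_null (t := {a + b}) ?_ (by simp)
    rintro _ ⟨⟨x, hx, rfl⟩, ⟨y, hy, hxy⟩⟩
    have := hmax hx
    have := hmin hy
    simp only [mem_singleton_iff] at *
    linarith
  rw [← h1, ← h2, ← measure_union₀ _ hdis]
  · refine measure_mono ?_
    rintro _ (⟨x, hx, rfl⟩ | ⟨x, hx, rfl⟩)
    · exact Set.add_mem_add hx hb
    · exact Set.add_mem_add ha hx
  · exact (hB.image (by fun_prop)).measurableSet.nullMeasurableSet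

theorem volume_le_iSup_isCompact_nonempty {A : Set ℝ} (hA : MeasurableSet A) :
    volume A ≤ ⨆ K : {K : Set ℝ // K ⊆ A ∧ IsCompact K ∧ K.Nonempty}, volume K.1 := by
  refine le_of_forall_lt fun r hr => ?_
  obtain ⟨K, hKA, hK, hrK⟩ := hA.exists_lt_isCompact hr
  have hne : K.Nonempty := by
    rw [nonempty_iff_ne_empty]
    rintro rfl
    simp at hrK
  exact hrK.trans_le (le_iSup
    (fun K : {K : Set ℝ // K ⊆ A ∧ IsCompact K ∧ K.Nonempty} => volume K.1) ⟨K, hKA, hK, hne⟩)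

/-- One-dimensional Brunn–Minkowski inequality. -/
theorem volume_add_volume_le_real {A B C : Set ℝ} (hA : MeasurableSet A) (hB : MeasurableSet B)
    (hA' : A.Nonempty) (hB' : B.Nonempty) (hC : A + B ⊆ C) :
    volume A + volume B ≤ volume C := by
  have inh : ∀ {A : Set ℝ}, A.Nonempty →
      Nonempty {K : Set ℝ // K ⊆ A ∧ IsCompact K ∧ K.Nonempty} :=
    fun ⟨a, ha⟩ => ⟨⟨{a}, by simpa, isCompact_singleton, by simp⟩⟩
  have := inh hA'
  have := inh hB'
  refine (add_le_add (volume_le_iSup_isCompact_nonempty hA)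
    (volume_le_iSup_isCompact_nonempty hB)).trans (ENNReal.iSup_add_iSup_le ?_)
  rintro ⟨K, hKA, hK, nK⟩ ⟨L, hLB, hL, nL⟩
  exact (volume_add_le_of_isCompact_real hK hL nK nL).trans
    (measure_mono ((Set.add_subset_add hKA hLB).trans hC))

theorem lintegral_le_of_superlevel {p q : ℝ} (hp : 0 < p) (hq : 0 < q)
    {f g h : ℝ → ℝ} (hf : Measurable f) (hg : Measurable g) (hh : Measurable h)
    (f0 : 0 ≤ f) (g0 : 0 ≤ g) (h0 : 0 ≤ h) (f1 : ∀ x, f x ≤ 1) (g1 : ∀ x, g x ≤ 1)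
    (fs : ∀ t < 1, ∃ x, t < f x) (gs : ∀ t < 1, ∃ x, t < g x)
    (H : ∀ t, 0 < t → ∀ x y, t < f x → t < g y → t < h (p * x + q * y)) :
    ENNReal.ofReal p * (∫⁻ x, ENNReal.ofReal (f x)) +
        ENNReal.ofReal q * (∫⁻ x, ENNReal.ofReal (g x))
      ≤ ∫⁻ x, ENNReal.ofReal (h x) := by
  rw [lintegral_eq_lintegral_meas_lt _ (ae_of_all _ f0) hf.aemeasurable,
    lintegral_eq_lintegral_meas_lt _ (ae_of_all _ g0) hg.aemeasurable,
    lintegral_eq_lintegral_meas_lt _ (ae_of_all _ h0) hh.aemeasurable,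
    ← lintegral_const_mul' _ _ ENNReal.ofReal_ne_top,
    ← lintegral_const_mul' _ _ ENNReal.ofReal_ne_top, ← lintegral_add_left]
  · refine lintegral_mono_ae ?_
    filter_upwards [ae_restrict_mem measurableSet_Ioi] with t ht
    rcases lt_or_ge t 1 with ht1 | ht1
    · have e1 : ENNReal.ofReal p * volume {a | t < f a} = volume (p • {a | t < f a}) := by
        rw [Measure.addHaar_smul]; simp [abs_of_pos hp]
      have e2 : ENNReal.ofReal q * volume {a | t < g a} = volume (q • {a | t < g a}) := by
        rw [Measure.addHaar_smul]; simp [abs_of_pos hq]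
      rw [e1, e2]
      refine volume_add_volume_le_real ((measurableSet_lt measurable_const hf).const_smul₀ _)
        ((measurableSet_lt measurable_const hg).const_smul₀ _)
        (Set.Nonempty.smul_set (fs t ht1)) (Set.Nonempty.smul_set (gs t ht1)) ?_
      rintro _ ⟨_, ⟨x, hx, rfl⟩, _, ⟨y, hy, rfl⟩, rfl⟩
      exact H t ht x y hx hy
    · have e1 : {a | t < f a} = ∅ := by ext x; simpa using (f1 x).trans ht1
      have e2 : {a | t < g a} = ∅ := by ext x; simpa using (g1 x).trans ht1
      simp [e1, e2]
  · refine Measurable.const_mul ?_ _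
    exact Antitone.measurable fun s t hst => measure_mono fun x hx => lt_of_le_of_lt hst hx

/-- The Prékopa–Leindler inequality, as a property of a measure on a real vector space. -/
def IsPrekopaLeindler {E : Type*} [AddCommGroup E] [Module ℝ E] [MeasurableSpace E]
    (μ : Measure E) : Prop :=
  ∀ (p q : ℝ), 0 < p → 0 < q → p + q = 1 → ∀ f g h : E → ℝ≥0∞,
    Measurable f → Measurable g → Measurable h →
    (∀ x y, f x ^ p * g y ^ q ≤ h (p • x + q • y)) →
    (∫⁻ x, f x ∂μ) ^ p * (∫⁻ x, g x ∂μ) ^ q ≤ ∫⁻ x, h x ∂μ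

theorem prekopaLeindler_real_of_bounded {p q : ℝ} (hp : 0 < p) (hq : 0 < q) (hpq : p + q = 1)
    {f g h : ℝ → ℝ≥0∞} (hf : Measurable f) (hg : Measurable g) (hh : Measurable h)
    (H : ∀ x y, f x ^ p * g y ^ q ≤ h (p • x + q • y))
    (bf : ⨆ x, f x ≠ ⊤) (bg : ⨆ x, g x ≠ ⊤) :
    (∫⁻ x, f x) ^ p * (∫⁻ x, g x) ^ q ≤ ∫⁻ x, h x := by
  set M := ⨆ x, f x with hM
  set N := ⨆ x, g x with hN
  have fM : ∀ x, f x ≤ M := le_iSup f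
  have gN : ∀ x, g x ≤ N := le_iSup g
  rcases eq_or_ne M 0 with M0 | M0
  · have : ∀ x, f x = 0 := fun x => le_antisymm ((fM x).trans M0.le) bot_le
    simp [this, hp]
  rcases eq_or_ne N 0 with N0 | N0
  · have : ∀ x, g x = 0 := fun x => le_antisymm ((gN x).trans N0.le) bot_le
    simp [this, hq]
  set R := M ^ p * N ^ q with hR
  have R0 : R ≠ 0 := by simp [hR, M0, N0, bf, bg]
  have Rt : R ≠ ⊤ := ENNReal.mul_ne_top (ENNReal.rpow_ne_top_of_nonneg hp.le bf)
    (ENNReal.rpow_ne_top_of_nonneg hq.le bg)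
  have fM1 : ∀ x, f x / M ≤ 1 := fun x => ENNReal.div_le_of_le_mul (by simpa using fM x)
  have gN1 : ∀ x, g x / N ≤ 1 := fun x => ENNReal.div_le_of_le_mul (by simpa using gN x)
  have sup : ∀ {f : ℝ → ℝ≥0∞} {M : ℝ≥0∞}, M = ⨆ x, f x → M ≠ 0 → M ≠ ⊤ →
      (∀ x, f x / M ≤ 1) → ∀ t < 1, ∃ x, t < (f x / M).toReal := by
    intro f M hM M0 bf f1 t ht
    by_contra! hcon
    have ht0 : 0 ≤ t := ENNReal.toReal_nonneg.trans (hcon 0)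
    have : M ≤ ENNReal.ofReal t * M := by
      conv_lhs => rw [hM]
      refine iSup_le fun x => ?_
      rw [← ENNReal.div_le_iff M0 bf]
      exact (ENNReal.le_ofReal_iff_toReal_le (ne_top_of_le_ne_top (by simp) (f1 x)) ht0).2 (hcon x)
    have h2 : ENNReal.ofReal t * M < 1 * M :=
      ENNReal.mul_lt_mul_left M0 bf (by simpa using ht)
    rw [one_mul] at h2
    exact absurd this (not_le.2 h2)
  have key := lintegral_le_of_superlevel hp hq (f := fun x => (f x / M).toReal)
    (g := fun x => (g x / N).toReal) (h := fun x => (min (h x / R) 1).toReal)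
    (by fun_prop) (by fun_prop) (by fun_prop) (fun x => ENNReal.toReal_nonneg)
    (fun x => ENNReal.toReal_nonneg) (fun x => ENNReal.toReal_nonneg)
    (fun x => ENNReal.toReal_le_of_le_ofReal zero_le_one (by simpa using fM1 x))
    (fun x => ENNReal.toReal_le_of_le_ofReal zero_le_one (by simpa using gN1 x))
    (sup hM M0 bf fM1) (sup hN N0 bg gN1) ?_
  · have e1 : ∀ x, ENNReal.ofReal (f x / M).toReal = f x / M :=
      fun x => ENNReal.ofReal_toReal (ne_top_of_le_ne_top (by simp) (fM1 x))
    have e2 : ∀ x, ENNReal.ofReal (g x / N).toReal = g x / N :=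
      fun x => ENNReal.ofReal_toReal (ne_top_of_le_ne_top (by simp) (gN1 x))
    have e3 : ∀ x, ENNReal.ofReal (min (h x / R) 1).toReal ≤ h x / R :=
      fun x => ENNReal.ofReal_toReal_le.trans (min_le_left _ _)
    simp only [e1, e2] at key
    simp only [div_eq_mul_inv] at key
    rw [lintegral_mul_const _ hf, lintegral_mul_const _ hg] at key
    have k2 := (ennreal_geom_mean_le_arith_mean hp hq hpq _ _).trans
      (key.trans (lintegral_mono e3))
    simp only [div_eq_mul_inv] at k2
    rw [lintegral_mul_const _ hh, ENNReal.mul_rpow_of_nonneg _ _ hp.le,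
      ENNReal.mul_rpow_of_nonneg _ _ hq.le, ENNReal.inv_rpow, ENNReal.inv_rpow,
      mul_mul_mul_comm, ← ENNReal.mul_inv (by simp [M0, bf]) (by simp [M0, bf]), ← hR] at k2
    exact (ENNReal.mul_le_mul_iff_left (by simpa using Rt) (by simpa using R0)).1 k2
  · intro t ht x y hx hy
    have hx' : ENNReal.ofReal t < f x / M := (ENNReal.lt_ofReal_iff_toReal_lt (by simp)).2 (by
      simpa [ENNReal.toReal_ofReal ht.le] using hx) |>.trans_le ENNReal.ofReal_toReal_le
    have hy' : ENNReal.ofReal t < g y / N := (ENNReal.lt_ofReal_iff_toReal_lt (by simp)).2 (by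
      simpa [ENNReal.toReal_ofReal ht.le] using hy) |>.trans_le ENNReal.ofReal_toReal_le
    have t1 : ENNReal.ofReal t < 1 := hx'.trans_le (fM1 x)
    have h1 : (f x / M) ^ p * (g y / N) ^ q ≤ h (p * x + q * y) / R := by
      rw [ENNReal.div_rpow_of_nonneg _ _ hp.le, ENNReal.div_rpow_of_nonneg _ _ hq.le,
        div_eq_mul_inv, div_eq_mul_inv, mul_mul_mul_comm,
        ← ENNReal.mul_inv (by simp [M0, bf]) (by simp [M0, bf]), ← div_eq_mul_inv]
      exact ENNReal.div_le_div_right (H x y) _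
    have h2 : ENNReal.ofReal t < (f x / M) ^ p * (g y / N) ^ q := by
      have : ENNReal.ofReal t = ENNReal.ofReal t ^ p * ENNReal.ofReal t ^ q := by
        rw [← ENNReal.rpow_add_of_nonneg _ _ hp.le hq.le, hpq, ENNReal.rpow_one]
      rw [this]
      exact ENNReal.mul_lt_mul (ENNReal.rpow_lt_rpow hx' hp) (ENNReal.rpow_lt_rpow hy' hq)
    rw [← ENNReal.toReal_ofReal ht.le]
    exact (ENNReal.toReal_lt_toReal (by simp) (by simp)).2 (lt_min (h2.trans_le h1) t1)

theorem isPrekopaLeindler_real : IsPrekopaLeindler (volume : Measure ℝ) := by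
  intro p q hp hq hpq f g h hf hg hh H
  rcases eq_or_ne (∫⁻ x, f x) 0 with f0 | f0
  · simp [f0, hp]
  rcases eq_or_ne (∫⁻ x, g x) 0 with g0 | g0
  · simp [g0, hq]
  have lim : ∀ {f : ℝ → ℝ≥0∞}, Measurable f →
      Tendsto (fun n : ℕ => ∫⁻ x, min (f x) n) atTop (𝓝 (∫⁻ x, f x)) := by
    intro f hf
    refine lintegral_tendsto_of_tendsto_of_monotone (fun n => by fun_prop)
      (ae_of_all _ fun x m n hmn => min_le_min_left _ (by exact_mod_cast hmn))
      (ae_of_all _ fun x => ?_)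
    simpa using (tendsto_const_nhds (x := f x)).min ENNReal.tendsto_nat_nhds_top
  have lim' := ENNReal.Tendsto.mul ((ENNReal.continuous_rpow_const.tendsto _).comp (lim hf))
    (Or.inl (by simp [f0, hp.le, hp])) ((ENNReal.continuous_rpow_const.tendsto _).comp (lim hg))
    (Or.inl (by simp [g0, hq.le, hq])) (a := (∫⁻ x, f x) ^ p) (b := (∫⁻ x, g x) ^ q)
  refine le_of_tendsto' lim' fun n => ?_
  refine prekopaLeindler_real_of_bounded hp hq hpq (by fun_prop) (by fun_prop) hh ?_ ?_ ?_
  · exact fun x y => (mul_le_mul' (ENNReal.rpow_le_rpow (min_le_left _ _) hp.le)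
      (ENNReal.rpow_le_rpow (min_le_left _ _) hq.le)).trans (H x y)
  · exact ne_top_of_le_ne_top (ENNReal.natCast_ne_top n) (iSup_le fun x => min_le_right _ _)
  · exact ne_top_of_le_ne_top (ENNReal.natCast_ne_top n) (iSup_le fun x => min_le_right _ _)

theorem IsPrekopaLeindler.prod {E F : Type*} [AddCommGroup E] [Module ℝ E] [MeasurableSpace E]
    [AddCommGroup F] [Module ℝ F] [MeasurableSpace F] {μ : Measure E} {ν : Measure F}
    [SFinite ν] (hμ : IsPrekopaLeindler μ) (hν : IsPrekopaLeindler ν) :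
    IsPrekopaLeindler (μ.prod ν) := by
  intro p q hp hq hpq f g h hf hg hh H
  rw [lintegral_prod _ hf.aemeasurable, lintegral_prod _ hg.aemeasurable,
    lintegral_prod _ hh.aemeasurable]
  refine hμ p q hp hq hpq _ _ _ hf.lintegral_prod_right' hg.lintegral_prod_right'
    hh.lintegral_prod_right' fun x y => ?_
  exact hν p q hp hq hpq _ _ _ (by fun_prop) (by fun_prop) (by fun_prop)
    fun z w => H (x, z) (y, w)

theorem IsPrekopaLeindler.of_measurePreserving {E F : Type*} [AddCommGroup E] [Module ℝ E]
    [MeasurableSpace E] [AddCommGroup F] [Module ℝ F] [MeasurableSpace F] {μ : Measure E}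
    {ν : Measure F} (hν : IsPrekopaLeindler ν) (e : F ≃ᵐ E) (he : MeasurePreserving e ν μ)
    (hlin : IsLinearMap ℝ e) : IsPrekopaLeindler μ := by
  intro p q hp hq hpq f g h hf hg hh H
  rw [← he.lintegral_comp hf, ← he.lintegral_comp hg, ← he.lintegral_comp hh]
  refine hν p q hp hq hpq _ _ _ (hf.comp e.measurable) (hg.comp e.measurable)
    (hh.comp e.measurable) fun x y => ?_
  simpa [hlin.map_add, hlin.map_smul] using H (e x) (e y)

theorem isPrekopaLeindler_pi : ∀ n : ℕ, IsPrekopaLeindler (volume : Measure (Fin n → ℝ))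
  | 0 => by
    intro p q hp hq hpq f g h hf hg hh H
    let z : Fin 0 → ℝ := @default _ Unique.instInhabited
    have h0 := H z z
    rw [Subsingleton.elim (p • z + q • z) z] at h0
    have hu : (volume : Measure (Fin 0 → ℝ)) univ = 1 := by simp [volume_pi]
    simpa only [lintegral_unique, hu, mul_one] using h0
  | n + 1 => by
    refine (isPrekopaLeindler_real.prod (isPrekopaLeindler_pi n)).of_measurePreserving
      (MeasurableEquiv.piFinSuccAbove (fun _ => ℝ) 0).symm
      (volume_preserving_piFinSuccAbove (fun _ => ℝ) 0).symm ⟨?_, ?_⟩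
    · intro x y
      ext i
      refine Fin.cases ?_ (fun j => ?_) i <;> simp
    · intro c x
      ext i
      refine Fin.cases ?_ (fun j => ?_) i <;> simp

theorem isPrekopaLeindler_euclideanSpace (n : ℕ) :
    IsPrekopaLeindler (volume : Measure (EuclideanSpace ℝ (Fin n))) :=
  (isPrekopaLeindler_pi n).of_measurePreserving (MeasurableEquiv.toLp 2 (Fin n → ℝ))
    (EuclideanSpace.volume_preserving_symm_measurableEquiv_toLp (Fin n)).symm
    ⟨fun _ _ => rfl, fun _ _ => rfl⟩

theorem volume_rpow_mul_le {n : ℕ} {p q : ℝ} (hp : 0 < p) (hq : 0 < q) (hpq : p + q = 1)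
    {A B C : Set (EuclideanSpace ℝ (Fin n))} (hA : MeasurableSet A) (hB : MeasurableSet B)
    (hC : MeasurableSet C) (hABC : ∀ x ∈ A, ∀ y ∈ B, p • x + q • y ∈ C) :
    volume A ^ p * volume B ^ q ≤ volume C := by
  have := isPrekopaLeindler_euclideanSpace n p q hp hq hpq (A.indicator 1) (B.indicator 1)
    (C.indicator 1) (measurable_one.indicator hA) (measurable_one.indicator hB)
    (measurable_one.indicator hC) ?_
  · simpa [lintegral_indicator_one, hA, hB, hC] using this
  · intro x y
    by_cases hx : x ∈ A
    · by_cases hy : y ∈ B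
      · simp [hx, hy, hABC x hx y hy]
      · simp [hy, hq]
    · simp [hx, hp]

theorem volume_real_rpow_mul_le {n : ℕ} {p q : ℝ} (hp : 0 < p) (hq : 0 < q) (hpq : p + q = 1)
    {A B C : Set (EuclideanSpace ℝ (Fin n))} (hA : MeasurableSet A) (hB : MeasurableSet B)
    (hC : MeasurableSet C) (hC' : volume C ≠ ⊤) (hABC : ∀ x ∈ A, ∀ y ∈ B, p • x + q • y ∈ C) :
    volume.real A ^ p * volume.real B ^ q ≤ volume.real C := by
  have := ENNReal.toReal_mono hC' (volume_rpow_mul_le hp hq hpq hA hB hC hABC)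
  rwa [ENNReal.toReal_mul, ← ENNReal.toReal_rpow, ← ENNReal.toReal_rpow] at this

/-- The `n`-th root of the volume of a subset of `ℝⁿ`. -/
noncomputable def volRadius {n : ℕ} (A : Set (EuclideanSpace ℝ (Fin n))) : ℝ :=
  volume.real A ^ ((n : ℝ)⁻¹)

section volRadius

variable {n : ℕ} {A B : Set (EuclideanSpace ℝ (Fin n))}

theorem volRadius_nonneg : 0 ≤ volRadius A := Real.rpow_nonneg measureReal_nonneg _

theorem volRadius_pow (hn : n ≠ 0) : volRadius A ^ n = volume.real A :=
  Real.rpow_inv_natCast_pow measureReal_nonneg hn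

theorem volRadius_mono (hAB : A ⊆ B) (hB : volume B ≠ ⊤) : volRadius A ≤ volRadius B :=
  Real.rpow_le_rpow measureReal_nonneg (measureReal_mono hAB hB) (by positivity)

theorem volRadius_congr (h : volume A = volume B) : volRadius A = volRadius B := by
  simp [volRadius, measureReal_def, h]

theorem volume_real_smul (c : ℝ) (A : Set (EuclideanSpace ℝ (Fin n))) :
    volume.real (c • A) = |c| ^ n * volume.real A := by
  simp [measureReal_def, Measure.addHaar_smul, abs_pow, ENNReal.toReal_mul]

theorem volRadius_le_add_left (hA : IsCompact A) (hB : IsCompact B) (hB' : B.Nonempty) :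
    volRadius A ≤ volRadius (A + B) := by
  obtain ⟨b, hb⟩ := hB'
  have h : volume ((fun x => x + b) '' A) = volume A := by simp [Set.image_add_right]
  rw [← volRadius_congr h]
  refine volRadius_mono ?_ (hA.add hB).measure_lt_top.ne
  rintro _ ⟨x, hx, rfl⟩
  exact Set.add_mem_add hx hb

/-- The Brunn–Minkowski inequality. -/
theorem volRadius_add_le (hn : n ≠ 0) (hA : IsCompact A) (hB : IsCompact B)
    (hA' : A.Nonempty) (hB' : B.Nonempty) : volRadius A + volRadius B ≤ volRadius (A + B) := by
  rcases (volRadius_nonneg (A := A)).eq_or_lt with a0 | a0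
  · rw [← a0, zero_add, add_comm]
    exact volRadius_le_add_left hB hA hA'
  rcases (volRadius_nonneg (A := B)).eq_or_lt with b0 | b0
  · rw [← b0, add_zero]
    exact volRadius_le_add_left hA hB hB'
  set a := volRadius A with ha
  set b := volRadius B with hb
  have hp : 0 < a / (a + b) := by positivity
  have hq : 0 < b / (a + b) := by positivity
  have hpq : a / (a + b) + b / (a + b) = 1 := by field_simp
  have key := volume_real_rpow_mul_le hp hq hpq (A := (a / (a + b))⁻¹ • A)
    (B := (b / (a + b))⁻¹ • B) (C := A + B) (hA.smul _).measurableSet (hB.smul _).measurableSet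
    (hA.add hB).measurableSet (hA.add hB).measure_lt_top.ne ?_
  · have e1 : volume.real ((a / (a + b))⁻¹ • A) = (a + b) ^ n := by
      rw [volume_real_smul, ← volRadius_pow hn, ← ha, ← mul_pow, abs_of_pos (by positivity)]
      field_simp
    have e2 : volume.real ((b / (a + b))⁻¹ • B) = (a + b) ^ n := by
      rw [volume_real_smul, ← volRadius_pow hn, ← hb, ← mul_pow, abs_of_pos (by positivity)]
      field_simp
    rw [e1, e2, ← Real.rpow_add (by positivity), hpq, Real.rpow_one, ← volRadius_pow hn] at key
    exact le_of_pow_le_pow_left₀ hn volRadius_nonneg key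
  · rintro _ ⟨x, hx, rfl⟩ _ ⟨y, hy, rfl⟩
    simp only [smul_inv_smul₀ hp.ne', smul_inv_smul₀ hq.ne']
    exact Set.add_mem_add hx hy

end volRadius

theorem isCompact_sum {E ι : Type*} [AddCommMonoid E] [TopologicalSpace E] [ContinuousAdd E]
    (s : Finset ι) {K : ι → Set E} (hK : ∀ i ∈ s, IsCompact (K i)) :
    IsCompact (∑ i ∈ s, K i) := by
  classical
  induction s using Finset.induction_on with
  | empty => exact isCompact_singleton
  | insert i s hi ih =>
    rw [Finset.sum_insert hi]
    exact (hK i (by simp)).add (ih fun j hj => hK j (by simp [hj]))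

theorem sum_set_nonempty {E ι : Type*} [AddCommMonoid E] (s : Finset ι) {K : ι → Set E}
    (hK : ∀ i ∈ s, (K i).Nonempty) : (∑ i ∈ s, K i).Nonempty := by
  classical
  induction s using Finset.induction_on with
  | empty => exact Set.singleton_nonempty 0
  | insert i s hi ih =>
    rw [Finset.sum_insert hi]
    exact (hK i (by simp)).add (ih fun j hj => hK j (by simp [hj]))

theorem sum_volRadius_le {n : ℕ} (hn : n ≠ 0) {ι : Type*} (s : Finset ι)
    {K : ι → Set (EuclideanSpace ℝ (Fin n))} (hK : ∀ i ∈ s, IsCompact (K i))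
    (hK' : ∀ i ∈ s, (K i).Nonempty) :
    ∑ i ∈ s, volRadius (K i) ≤ volRadius (∑ i ∈ s, K i) := by
  classical
  induction s using Finset.induction_on with
  | empty => simpa using volRadius_nonneg
  | insert i s hi ih =>
    rw [Finset.sum_insert hi, Finset.sum_insert hi]
    have hK1 : ∀ j ∈ s, IsCompact (K j) := fun j hj => hK j (by simp [hj])
    have hK2 : ∀ j ∈ s, (K j).Nonempty := fun j hj => hK' j (by simp [hj])
    exact (add_le_add le_rfl (ih hK1 hK2)).trans (volRadius_add_le hn (hK i (by simp))
      (isCompact_sum s hK1) (hK' i (by simp)) (sum_set_nonempty s hK2))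

section Frontier

variable {E : Type*} [NormedAddCommGroup E] [NormedSpace ℝ E]

theorem isPreconnected_frontier_of_convex (hE : 1 < Module.rank ℝ E) {K : Set E}
    (hK : Convex ℝ K) (hKint : (interior K).Nonempty) (hKb : Bornology.IsBounded K) :
    IsPreconnected (frontier K) := by
  obtain ⟨h, -, -, hf⟩ :=
    exists_homeomorph_image_interior_closure_frontier_eq_unitBall hK hKint hKb
  exact h.isPreconnected_image.1 (hf ▸ isPreconnected_sphere hE 0 1)

theorem subset_of_frontier_subset [Nontrivial E] {K U : Set E} (hK : IsCompact K)
    (hU : IsOpen U) (hUc : Convex ℝ U) (h : frontier K ⊆ U) : K ⊆ U := by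
  intro k hk
  by_contra hkU
  obtain ⟨f, hf⟩ := geometric_hahn_banach_open_point hUc hU hkU
  obtain ⟨p, hpK, hp⟩ := hK.exists_isMaxOn ⟨k, hk⟩ f.continuous.continuousOn
  have := NormedSpace.noncompactSpace ℝ E
  have hKu : K ≠ univ := fun h => noncompact_univ E (h ▸ hK)
  obtain ⟨z, hz⟩ := nonempty_frontier_iff.2 ⟨⟨k, hk⟩, hKu⟩
  have hf0 : f ≠ 0 := by
    rintro rfl
    simpa using hf z (h hz)
  by_cases hpi : p ∈ interior K
  · have hopen : IsOpen (f '' interior K) :=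
      f.isOpenMap_of_ne_zero hf0 _ isOpen_interior
    have hmem : f p ∈ f '' interior K := ⟨p, hpi, rfl⟩
    obtain ⟨r, hr, hrs⟩ := Metric.isOpen_iff.1 hopen _ hmem
    have : f p + r / 2 ∈ f '' interior K := hrs (by
      simp [abs_of_pos hr, hr])
    obtain ⟨y, hy, hfy⟩ := this
    have : f y ≤ f p := hp (interior_subset hy)
    linarith
  · have h1 := hf p (h ⟨subset_closure hpK, hpi⟩)
    have h2 : f k ≤ f p := hp hk
    linarith

omit [NormedSpace ℝ E] in
theorem isOpen_setOf_forall_sub_mem_interior {B L : Set E} (hB : IsCompact B) :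
    IsOpen {y | ∀ b ∈ B, y - b ∈ interior L} := by
  have : {y | ∀ b ∈ B, y - b ∈ interior L} = (B + (interior L)ᶜ)ᶜ := by
    ext y
    simp only [mem_ofPred_eq, mem_compl_iff, Set.mem_add, not_exists, not_and]
    constructor
    · rintro h b hb z hz rfl
      exact hz (by simpa using h b hb)
    · intro h b hb
      by_contra hcon
      exact h b hb _ hcon (by abel)
  rw [this]
  exact (isOpen_interior.isClosed_compl.add_left_of_isCompact hB).isOpen_compl

theorem convex_setOf_forall_sub_mem {B L : Set E} (hL : Convex ℝ L) :
    Convex ℝ {y | ∀ b ∈ B, y - b ∈ L} := by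
  intro x hx y hy a c ha hc hac b hb
  have := hL (hx b hb) (hy b hb) ha hc hac
  convert this using 1
  have : b = a • b + c • b := by rw [← add_smul, hac, one_smul]
  conv_lhs => rw [this]
  module

/-- The points missed by a sum of boundaries form the set of points `x` for which the reflected sum
of the remaining bodies about `x` lies in the interior of the dominant body `L`. -/
theorem sub_mem_interior_of_notMem_sum_frontier (hE : 1 < Module.rank ℝ E) {ι : Type*}
    {K : ι → Set E} (hK : ∀ i, IsCompact (K i)) (hKconv : ∀ i, Convex ℝ (K i))
    (hKint : ∀ i, (interior (K i)).Nonempty) {L : Set E} (hL : IsCompact L)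
    (hLconv : Convex ℝ L) (hLK : ∀ i v, ∃ l ∈ L, v - l ∉ interior (K i)) (s : Finset ι) :
    ∀ x, x ∈ L + ∑ i ∈ s, K i → x ∉ frontier L + ∑ i ∈ s, frontier (K i) →
      ∀ b ∈ ∑ i ∈ s, K i, x - b ∈ interior L := by
  classical
  have : Nontrivial E := rank_pos_iff_nontrivial.1 (zero_lt_one.trans hE)
  induction s using Finset.induction_on with
  | empty =>
    intro x hx hxf b hb
    simp only [Finset.sum_empty, add_zero] at hx hxf
    have hb : b = 0 := by simpa using hb
    rw [hb, sub_zero]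
    by_contra hcon
    exact hxf ⟨subset_closure hx, hcon⟩
  | insert i s hi ih =>
    intro x hx hxf
    simp only [Finset.sum_insert hi] at hx hxf ⊢
    set B := ∑ i ∈ s, K i with hBdef
    have hB : IsCompact B := isCompact_sum s fun i _ => hK i
    obtain ⟨c, hc⟩ : B.Nonempty :=
      sum_set_nonempty s fun i _ => (hKint i).mono interior_subset
    have hT : IsCompact (L + B) := hL.add hB
    have hTconv : Convex ℝ (L + B) := hLconv.add (convex_sum _ fun i _ => hKconv i)
    have hHT : {y | ∀ b ∈ B, y - b ∈ interior L} ⊆ L + B := fun y hy =>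
      ⟨y - c, interior_subset (hy c hc), c, hc, sub_add_cancel y c⟩
    have hcover : (fun k => x - k) '' frontier (K i) ⊆
        (L + B)ᶜ ∪ {y | ∀ b ∈ B, y - b ∈ interior L} := by
      rintro _ ⟨k, hk, rfl⟩
      by_cases hxk : x - k ∈ L + B
      · refine Or.inr (ih _ hxk ?_)
        rintro ⟨u, hu, w, hw, huw⟩
        exact hxf ⟨u, hu, k + w, Set.add_mem_add hk hw, by
          simp only at huw ⊢
          rw [add_left_comm, huw]; abel⟩
      · exact Or.inl hxk
    have hpre : IsPreconnected ((fun k => x - k) '' frontier (K i)) :=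
      (isPreconnected_frontier_of_convex hE (hKconv i) (hKint i) (hK i).isBounded).image _
        (by fun_prop)
    rcases IsPreconnected.subset_or_subset hT.isClosed.isOpen_compl
      (isOpen_setOf_forall_sub_mem_interior hB)
      (disjoint_left.2 fun y hy hy' => hy (hHT hy')) hcover hpre with h | h
    · exfalso
      have hTsub : L + B ⊆ (fun z => x - z) ⁻¹' interior (K i) := by
        refine IsPreconnected.subset_left_of_subset_union
          (v := (fun z => x - z) ⁻¹' (K i)ᶜ) (isOpen_interior.preimage (by fun_prop))
          ((hK i).isClosed.isOpen_compl.preimage (by fun_prop)) ?_ ?_ ?_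
          hTconv.isPreconnected
        · exact disjoint_left.2 fun z hz hz' => hz' (interior_subset hz)
        · intro z hz
          by_cases h1 : x - z ∈ K i
          · left
            by_contra h2
            exact h ⟨x - z, ⟨subset_closure h1, h2⟩, rfl⟩ (by simpa using hz)
          · exact Or.inr h1
        · obtain ⟨l, hl, _, ⟨k, hk, b, hb, rfl⟩, rfl⟩ := hx
          refine ⟨l + b, Set.add_mem_add hl hb, ?_⟩
          by_contra h2
          refine h ⟨k, ⟨subset_closure hk, ?_⟩, rfl⟩ ?_
          · intro h3
            exact h2 (by simpa [show l + (k + b) - (l + b) = k by abel] using h3)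
          · simp only [show l + (k + b) - k = l + b by abel]
            exact Set.add_mem_add hl hb
      obtain ⟨l, hl, hlK⟩ := hLK i (x - c)
      refine hlK ?_
      have := hTsub (Set.add_mem_add hl hc)
      simpa [show x - (l + c) = x - c - l by abel] using this
    · have hsub : K i ⊆ (fun k => x - k) ⁻¹' {y | ∀ b ∈ B, y - b ∈ interior L} := by
        refine subset_of_frontier_subset (hK i)
          ((isOpen_setOf_forall_sub_mem_interior hB).preimage (by fun_prop)) ?_
          (image_subset_iff.1 h)
        intro k hk k' hk' a a' ha ha' haa
        have := convex_setOf_forall_sub_mem (B := B) hLconv.interior hk hk' ha ha' haa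
        simp only [mem_preimage]
        convert this using 1
        have hx' : x = a • x + a' • x := by rw [← add_smul, haa, one_smul]
        conv_lhs => rw [hx']
        module
      rintro _ ⟨k, hk, b, hb, rfl⟩
      have := hsub hk b hb
      simpa [show x - (k + b) = x - k - b by abel] using this

end Frontier

/-- The volume of the part of `A` in the half-space `{x | u x ≤ s}`. -/
noncomputable def sublevelVol {n : ℕ} (u : StrongDual ℝ (EuclideanSpace ℝ (Fin n)))
    (A : Set (EuclideanSpace ℝ (Fin n))) (s : ℝ) : ℝ :=
  volume.real (A ∩ {x | u x ≤ s})

section sublevelVol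

variable {n : ℕ} {u : StrongDual ℝ (EuclideanSpace ℝ (Fin n))}
  {A B C : Set (EuclideanSpace ℝ (Fin n))}

theorem measurableSet_sublevel (s : ℝ) : MeasurableSet {x | u x ≤ s} :=
  measurableSet_le u.continuous.measurable measurable_const

theorem sublevelVol_nonneg (s : ℝ) : 0 ≤ sublevelVol u A s := measureReal_nonneg

theorem sublevelVol_mono (hA : IsCompact A) : Monotone (sublevelVol u A) := fun _ _ hst =>
  measureReal_mono (inter_subset_inter_right _ fun _ hx => le_trans hx hst)
    (ne_top_of_le_ne_top hA.measure_lt_top.ne (measure_mono inter_subset_left))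

theorem sublevelVol_add_superlevel (hA : IsCompact A) (s : ℝ) :
    sublevelVol u A s + volume.real (A ∩ {x | s < u x}) = volume.real A := by
  have h := measureReal_inter_add_sdiff (μ := volume) (s := A) (t := {x | u x ≤ s})
    (measurableSet_sublevel s) (h := hA.measure_lt_top.ne)
  have e : A ∩ {x | s < u x} = A \ {x | u x ≤ s} := by
    ext x
    simp
  rwa [e]

theorem sublevelVol_le (hA : IsCompact A) (s : ℝ) : sublevelVol u A s ≤ volume.real A :=
  measureReal_mono inter_subset_left hA.measure_lt_top.ne

theorem volume_level_eq_zero (hu : u ≠ 0) (s : ℝ) : volume {x | u x = s} = 0 := by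
  obtain ⟨z, hz⟩ : ∃ z, u z ≠ 0 := by
    by_contra! h
    exact hu (by ext x; simp [h x])
  have hker : LinearMap.ker (u : EuclideanSpace ℝ (Fin n) →ₗ[ℝ] ℝ) ≠ ⊤ := by
    intro h
    exact hz (by simpa using (h ▸ Submodule.mem_top : z ∈ LinearMap.ker u.toLinearMap))
  have h0 := Measure.addHaar_submodule (volume : Measure (EuclideanSpace ℝ (Fin n))) _ hker
  rw [← measure_preimage_add_right volume (-((s / u z) • z))] at h0
  refine measure_mono_null (fun x hx => ?_) h0
  have hx : u x = s := hx
  simp [hx, hz]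

theorem continuous_sublevelVol (hu : u ≠ 0) (hA : IsCompact A) :
    Continuous (sublevelVol u A) := by
  have e : sublevelVol u A = fun s => ∫ x in A, {x | u x ≤ s}.indicator (fun _ => (1 : ℝ)) x := by
    ext s
    rw [integral_indicator (measurableSet_sublevel s)]
    simp [sublevelVol, Measure.restrict_restrict (measurableSet_sublevel s), measureReal_def,
      inter_comm]
  rw [e, continuous_iff_continuousAt]
  intro s
  refine continuousAt_of_dominated (bound := fun _ => 1)
    (Eventually.of_forall fun r => ?_) (Eventually.of_forall fun r => ae_of_all _ fun x => ?_) ?_ ?_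
  · exact (measurable_const.indicator (measurableSet_sublevel r)).aestronglyMeasurable
  · by_cases h : u x ≤ r <;> simp [h]
  · have : IsFiniteMeasure (volume.restrict A) := ⟨by simpa using hA.measure_lt_top⟩
    exact integrable_const _
  · refine ae_restrict_of_ae ?_
    have : ∀ᵐ x, u x ≠ s := by
      rw [ae_iff]
      simpa using volume_level_eq_zero hu s
    filter_upwards [this] with x hx
    rcases lt_or_gt_of_ne hx with h | h
    · refine (continuousAt_const (y := (1 : ℝ))).congr ?_
      filter_upwards [lt_mem_nhds h] with r hr
      simp [hr.le]
    · refine (continuousAt_const (y := (0 : ℝ))).congr ?_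
      filter_upwards [gt_mem_nhds h] with r hr
      simp [hr]

theorem exists_bounds (u : StrongDual ℝ (EuclideanSpace ℝ (Fin n))) (hA : IsCompact A) :
    ∃ lo hi, ∀ x ∈ A, lo < u x ∧ u x < hi := by
  obtain ⟨R, hR⟩ := (hA.image u.continuous).isBounded.subset_ball 0
  refine ⟨-R, R, fun x hx => ?_⟩
  have := hR ⟨x, hx, rfl⟩
  rw [Metric.mem_ball, dist_zero_right, Real.norm_eq_abs, abs_lt] at this
  exact this

theorem sublevelVol_eq_zero {s : ℝ} (h : ∀ x ∈ A, s < u x) : sublevelVol u A s = 0 := by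
  have : A ∩ {x | u x ≤ s} = ∅ := by
    ext x
    simp only [mem_inter_iff, mem_ofPred_eq, mem_empty_iff_false, iff_false, not_and, not_le]
    exact h x
  simp [sublevelVol, this]

theorem sublevelVol_eq_volume {s : ℝ} (h : ∀ x ∈ A, u x ≤ s) :
    sublevelVol u A s = volume.real A := by
  rw [sublevelVol, inter_eq_left.2 (show A ⊆ {x | u x ≤ s} from h)]

theorem exists_quantile (hu : u ≠ 0) (hA : IsCompact A) :
    ∃ α : ℝ → ℝ, ∀ t ∈ Ioo 0 (volume.real A), sublevelVol u A (α t) = t := by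
  obtain ⟨lo, hi, h⟩ := exists_bounds u hA
  have : ∀ t, ∃ a, t ∈ Ioo 0 (volume.real A) → sublevelVol u A a = t := by
    intro t
    by_cases ht : t ∈ Ioo 0 (volume.real A)
    · obtain ⟨a, ha⟩ := mem_range_of_exists_le_of_exists_ge (continuous_sublevelVol hu hA)
        ⟨lo, (sublevelVol_eq_zero fun x hx => (h x hx).1).trans_le ht.1.le⟩
        ⟨hi, ht.2.le.trans (sublevelVol_eq_volume fun x hx => (h x hx).2.le).ge⟩
      exact ⟨a, fun _ => ha⟩
    · exact ⟨0, fun h => absurd h ht⟩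
  choose α hα using this
  exact ⟨α, fun t => hα t⟩

theorem sublevelVol_lower_lipschitz_of_lt (hC : IsCompact C) (hCc : Convex ℝ C) {lo hi : ℝ}
    (hb : ∀ x ∈ C, lo < u x ∧ u x < hi) {L U : ℝ} (hL : 0 < L) (hU : U < volume.real C) {x y : ℝ}
    (hxy : x < y) (hx : L ≤ sublevelVol u C x) (hy : sublevelVol u C y ≤ U) :
    (y - x) * ((Real.log (volume.real C) - Real.log U) * L) ≤
      (hi - lo) * (sublevelVol u C y - sublevelVol u C x) := by
  have hmono := sublevelVol_mono (u := u) hC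
  have hxyv := hmono hxy.le
  have hlo : lo ≤ x := by
    by_contra! h
    rw [sublevelVol_eq_zero fun z hz => h.trans (hb z hz).1] at hx
    linarith
  have hhi : y < hi := by
    by_contra! h
    rw [sublevelVol_eq_volume fun z hz => (hb z hz).2.le.trans h] at hy
    linarith
  have hd : 0 < hi - x := by linarith
  set q := (y - x) / (hi - x) with hq
  have hq0 : 0 < q := div_pos (by linarith) hd
  have hq1 : q < 1 := by rw [hq, div_lt_one hd]; linarith
  have hqe : q * (hi - x) = y - x := by rw [hq]; field_simp
  have key := volume_real_rpow_mul_le (p := 1 - q) (q := q) (by linarith) hq0 (by ring)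
    (A := C ∩ {z | u z ≤ x}) (B := C) (C := C ∩ {z | u z ≤ y})
    (hC.measurableSet.inter (measurableSet_sublevel x)) hC.measurableSet
    (hC.measurableSet.inter (measurableSet_sublevel y))
    (ne_top_of_le_ne_top hC.measure_lt_top.ne (measure_mono inter_subset_left)) ?_
  · change sublevelVol u C x ^ (1 - q) * _ ≤ sublevelVol u C y at key
    set a := sublevelVol u C x
    set b := sublevelVol u C y
    set W := volume.real C
    have ha : 0 < a := hL.trans_le hx
    have hb' : 0 < b := ha.trans_le hxyv
    have hW : 0 < W := by linarith
    have hlog := Real.log_le_log (by positivity) key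
    rw [Real.log_mul (by positivity) (by positivity), Real.log_rpow ha, Real.log_rpow hW] at hlog
    have h1 : Real.log b - Real.log a ≤ (b - a) / a := by
      rw [← Real.log_div hb'.ne' ha.ne', sub_div, div_self ha.ne']
      exact Real.log_le_sub_one_of_pos (by positivity)
    have h2 : Real.log a ≤ Real.log U := Real.log_le_log ha (hxyv.trans hy)
    have hl : 0 < Real.log W - Real.log U :=
      sub_pos.2 (Real.log_lt_log (by linarith) hU)
    have h3 : q * (Real.log W - Real.log U) ≤ (b - a) / a := by
      have : q * (Real.log W - Real.log U) ≤ q * (Real.log W - Real.log a) := by gcongr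
      linarith
    have h4 : q * (Real.log W - Real.log U) * L ≤ b - a := by
      rw [le_div_iff₀ ha] at h3
      refine le_trans ?_ h3
      gcongr
    calc (y - x) * ((Real.log W - Real.log U) * L)
        = (hi - x) * (q * (Real.log W - Real.log U) * L) := by rw [← hqe]; ring
      _ ≤ (hi - lo) * (b - a) := by
        have h5 : 0 ≤ b - a := by linarith
        have h6 : 0 ≤ hi - lo := by linarith
        gcongr
  · rintro z ⟨hz, hzx⟩ w hw
    refine ⟨hCc hz hw (by linarith) hq0.le (by ring), ?_⟩
    have hzx : u z ≤ x := hzx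
    have := (hb w hw).2.le
    simp only [mem_ofPred_eq, map_add, map_smul, smul_eq_mul]
    have h1 : (1 - q) * u z ≤ (1 - q) * x := mul_le_mul_of_nonneg_left hzx (by linarith)
    have h2 : q * u w ≤ q * hi := mul_le_mul_of_nonneg_left this hq0.le
    linarith

theorem sublevelVol_lower_lipschitz (hC : IsCompact C) (hCc : Convex ℝ C) {lo hi : ℝ}
    (hb : ∀ x ∈ C, lo < u x ∧ u x < hi) {L U : ℝ} (hL : 0 < L) (hU : U < volume.real C) {x y : ℝ}
    (hx : sublevelVol u C x ∈ Icc L U) (hy : sublevelVol u C y ∈ Icc L U) :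
    |x - y| * ((Real.log (volume.real C) - Real.log U) * L) ≤
      (hi - lo) * |sublevelVol u C x - sublevelVol u C y| := by
  rcases lt_trichotomy x y with h | rfl | h
  · rw [abs_sub_comm, abs_of_pos (sub_pos.2 h), abs_sub_comm,
      abs_of_nonneg (sub_nonneg.2 (sublevelVol_mono hC h.le))]
    exact sublevelVol_lower_lipschitz_of_lt hC hCc hb hL hU h hx.1 hy.2
  · simp
  · rw [abs_of_pos (sub_pos.2 h), abs_of_nonneg (sub_nonneg.2 (sublevelVol_mono hC h.le))]
    exact sublevelVol_lower_lipschitz_of_lt hC hCc hb hL hU h hy.1 hx.2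

theorem sqrt_mul_sqrt_le_volume (hA : MeasurableSet A) (hB : MeasurableSet B)
    (hC : MeasurableSet C) (hC' : volume C ≠ ⊤)
    (h : ∀ x ∈ A, ∀ y ∈ B, (2⁻¹ : ℝ) • (x + y) ∈ C) :
    √(volume.real A) * √(volume.real B) ≤ volume.real C := by
  rw [Real.sqrt_eq_rpow, Real.sqrt_eq_rpow]
  refine volume_real_rpow_mul_le (by norm_num) (by norm_num) (by norm_num) hA hB hC hC' ?_
  intro x hx y hy
  have := h x hx y hy
  rwa [smul_add, ← one_div] at this

theorem sublevelVol_midpoint_mem (hA : IsCompact A) (hB : IsCompact B) {V : ℝ}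
    (hAV : volume.real A = V) (hBV : volume.real B = V)
    (hCV : volume.real ((2⁻¹ : ℝ) • (A + B)) = V) (a b : ℝ) :
    sublevelVol u ((2⁻¹ : ℝ) • (A + B)) ((a + b) / 2) ∈
      Icc (√(sublevelVol u A a) * √(sublevelVol u B b))
        (V - √(V - sublevelVol u A a) * √(V - sublevelVol u B b)) := by
  have hC : IsCompact ((2⁻¹ : ℝ) • (A + B)) := (hA.add hB).smul _
  have hmem : ∀ x ∈ A, ∀ y ∈ B, (2⁻¹ : ℝ) • (x + y) ∈ (2⁻¹ : ℝ) • (A + B) :=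
    fun x hx y hy => Set.smul_mem_smul_set (Set.add_mem_add hx hy)
  have hms : ∀ s, MeasurableSet {x | s < u x} := fun s =>
    measurableSet_lt measurable_const u.continuous.measurable
  constructor
  · refine sqrt_mul_sqrt_le_volume (hA.measurableSet.inter (measurableSet_sublevel a))
      (hB.measurableSet.inter (measurableSet_sublevel b))
      (hC.measurableSet.inter (measurableSet_sublevel _))
      (ne_top_of_le_ne_top hC.measure_lt_top.ne (measure_mono inter_subset_left)) ?_
    rintro x ⟨hx, hxa⟩ y ⟨hy, hyb⟩
    refine ⟨hmem x hx y hy, ?_⟩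
    simp only [mem_ofPred_eq, map_add, map_smul, smul_eq_mul] at *
    linarith
  · have h1 := sublevelVol_add_superlevel (u := u) hA a
    have h2 := sublevelVol_add_superlevel (u := u) hB b
    have h3 := sublevelVol_add_superlevel (u := u) hC ((a + b) / 2)
    have h4 : √(volume.real (A ∩ {x | a < u x})) * √(volume.real (B ∩ {x | b < u x})) ≤
        volume.real ((2⁻¹ : ℝ) • (A + B) ∩ {x | (a + b) / 2 < u x}) := by
      refine sqrt_mul_sqrt_le_volume (hA.measurableSet.inter (hms a))
        (hB.measurableSet.inter (hms b)) (hC.measurableSet.inter (hms _))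
        (ne_top_of_le_ne_top hC.measure_lt_top.ne (measure_mono inter_subset_left)) ?_
      rintro x ⟨hx, hxa⟩ y ⟨hy, hyb⟩
      refine ⟨hmem x hx y hy, ?_⟩
      simp only [mem_ofPred_eq, map_add, map_smul, smul_eq_mul] at *
      linarith
    rw [show V - sublevelVol u A a = volume.real (A ∩ {x | a < u x}) by linarith,
      show V - sublevelVol u B b = volume.real (B ∩ {x | b < u x}) by linarith]
    linarith

theorem sq_sqrt_sub_sqrt_mul_le {s t : ℝ} (hs : 0 ≤ s) (ht : 0 ≤ t) :
    (√t - √s) ^ 2 * t ≤ (s - t) ^ 2 := by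
  have h1 := Real.sq_sqrt hs
  have h2 := Real.sq_sqrt ht
  have h3 : (s - t) ^ 2 = (√t - √s) ^ 2 * (√t + √s) ^ 2 := by
    rw [← mul_pow, show (√t - √s) * (√t + √s) = √t ^ 2 - √s ^ 2 by ring, h1, h2]
    ring
  rw [h3]
  refine mul_le_mul_of_nonneg_left ?_ (sq_nonneg _)
  nlinarith [Real.sqrt_nonneg s, Real.sqrt_nonneg t, mul_nonneg (Real.sqrt_nonneg s) (Real.sqrt_nonneg t)]

theorem midpoint_bounds_sub_le {s t V : ℝ} (hs : s ∈ Ioo 0 V) (ht : t ∈ Ioo 0 V) :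
    (V - √(V - t) * √(V - s)) - √t * √s ≤ (t⁻¹ + (V - t)⁻¹) / 2 * (s - t) ^ 2 := by
  have hs1 := hs.1.le
  have ht1 := ht.1
  have hs2 : 0 ≤ V - s := by linarith [hs.2]
  have ht2 : 0 < V - t := by linarith [ht.2]
  have h1 : (√t - √s) ^ 2 ≤ t⁻¹ * (s - t) ^ 2 := by
    rw [inv_mul_eq_div, le_div_iff₀ ht1]
    exact sq_sqrt_sub_sqrt_mul_le hs1 ht1.le
  have h2 : (√(V - t) - √(V - s)) ^ 2 ≤ (V - t)⁻¹ * (s - t) ^ 2 := by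
    rw [inv_mul_eq_div, le_div_iff₀ ht2]
    exact (sq_sqrt_sub_sqrt_mul_le hs2 ht2.le).trans_eq (by ring)
  nlinarith [Real.sq_sqrt hs1, Real.sq_sqrt ht1.le, Real.sq_sqrt hs2, Real.sq_sqrt ht2.le]

theorem hasDerivAt_quantile_sub (hA : IsCompact A) (hAc : Convex ℝ A) (hB : IsCompact B)
    (hBc : Convex ℝ B) {V : ℝ} (hAV : volume.real A = V) (hBV : volume.real B = V)
    (hCV : volume.real ((2⁻¹ : ℝ) • (A + B)) = V) {α β : ℝ → ℝ}
    (hα : ∀ t ∈ Ioo 0 V, sublevelVol u A (α t) = t)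
    (hβ : ∀ t ∈ Ioo 0 V, sublevelVol u B (β t) = t) {t : ℝ} (ht : t ∈ Ioo 0 V) :
    HasDerivAt (fun s => α s - β s) 0 t := by
  have hC : IsCompact ((2⁻¹ : ℝ) • (A + B)) := (hA.add hB).smul _
  have hCc : Convex ℝ ((2⁻¹ : ℝ) • (A + B)) := (hAc.add hBc).smul _
  obtain ⟨lo, hi, hb⟩ := exists_bounds u hC
  have ht0 := ht.1
  have htV := ht.2
  set M := (Real.log V - Real.log ((V + t) / 2)) * (t / 2) with hM
  have hM0 : 0 < M := mul_pos (sub_pos.2 (Real.log_lt_log (by linarith) (by linarith)))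
    (by linarith)
  have hlohi : 0 ≤ hi - lo := by
    have : (((2⁻¹ : ℝ) • (A + B))).Nonempty := by
      rw [nonempty_iff_ne_empty]
      intro h
      rw [h] at hCV
      simp at hCV
      linarith
    obtain ⟨x, hx⟩ := this
    linarith [(hb x hx).1, (hb x hx).2]
  have bound : ∀ᶠ s in 𝓝 t, ‖(α s - β s) - (α t - β t)‖ ≤
      (2 * (hi - lo) * ((t⁻¹ + (V - t)⁻¹) / 2) / M) * ‖‖s - t‖ ^ 2‖ := by
    have c1 : ∀ᶠ s in 𝓝 t, t / 2 < √t * √s := by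
      refine ContinuousAt.eventually_lt (f := fun _ => t / 2) (g := fun s => √t * √s)
        continuousAt_const (by fun_prop) ?_
      rw [Real.mul_self_sqrt ht0.le]
      linarith
    have c2 : ∀ᶠ s in 𝓝 t, V - √(V - t) * √(V - s) < (V + t) / 2 := by
      refine ContinuousAt.eventually_lt (g := fun _ => (V + t) / 2)
        (f := fun s => V - √(V - t) * √(V - s)) (by fun_prop) continuousAt_const ?_
      rw [Real.mul_self_sqrt (by linarith)]
      linarith
    filter_upwards [c1, c2, isOpen_Ioo.mem_nhds ht] with s h1 h2 hs
    have m1 := sublevelVol_midpoint_mem (u := u) hA hB hAV hBV hCV (α t) (β s)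
    have m2 := sublevelVol_midpoint_mem (u := u) hA hB hAV hBV hCV (α s) (β t)
    rw [hα t ht, hβ s hs] at m1
    rw [hα s hs, hβ t ht, mul_comm (√s), mul_comm (√(V - s))] at m2
    have key := sublevelVol_lower_lipschitz hC hCc hb (L := t / 2) (U := (V + t) / 2)
      (by linarith) (by linarith) ⟨h1.le.trans m1.1, m1.2.trans h2.le⟩
      ⟨h1.le.trans m2.1, m2.2.trans h2.le⟩
    rw [hCV, ← hM] at key
    have hdiff := (abs_sub_le_of_le_of_le m1.1 m1.2 m2.1 m2.2).trans (midpoint_bounds_sub_le hs ht)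
    have e : |(α t + β s) / 2 - (α s + β t) / 2| = |α s - β s - (α t - β t)| / 2 := by
      rw [abs_sub_comm, ← abs_two (α := ℝ), ← abs_div]
      congr 1
      rw [abs_two]
      ring
    rw [e] at key
    have key2 := key.trans (mul_le_mul_of_nonneg_left hdiff hlohi)
    rw [norm_pow, norm_norm, Real.norm_eq_abs, Real.norm_eq_abs, sq_abs, div_mul_eq_mul_div,
      le_div_iff₀ hM0]
    linarith
  rw [hasDerivAt_iff_isLittleO]
  simp only [smul_zero, sub_zero]
  exact (Asymptotics.IsBigO.of_bound _ bound).trans_isLittleO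
    (Asymptotics.isLittleO_pow_sub_sub t one_lt_two)

theorem exists_sublevelVol_shift (hu : u ≠ 0) (hA : IsCompact A) (hAc : Convex ℝ A)
    (hB : IsCompact B) (hBc : Convex ℝ B) {V : ℝ} (hAV : volume.real A = V)
    (hBV : volume.real B = V) (hCV : volume.real ((2⁻¹ : ℝ) • (A + B)) = V) :
    ∃ c, ∀ s, sublevelVol u A (s + c) = sublevelVol u B s := by
  obtain ⟨α, hα⟩ := exists_quantile hu hA
  obtain ⟨β, hβ⟩ := exists_quantile hu hB
  rw [hAV] at hα
  rw [hBV] at hβ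
  have hd : ∀ t ∈ Ioo 0 V, HasDerivAt (fun s => α s - β s) 0 t := fun t ht =>
    hasDerivAt_quantile_sub hA hAc hB hBc hAV hBV hCV hα hβ ht
  obtain ⟨c, hc⟩ := isOpen_Ioo.exists_is_const_of_deriv_eq_zero isPreconnected_Ioo
    (fun t ht => (hd t ht).differentiableAt.differentiableWithinAt) fun t ht => (hd t ht).deriv
  refine ⟨c, fun s => ?_⟩
  have mA := sublevelVol_mono (u := u) hA
  have mB := sublevelVol_mono (u := u) hB
  rcases lt_trichotomy (sublevelVol u A (s + c)) (sublevelVol u B s) with h | h | h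
  · exfalso
    obtain ⟨t, ht1, ht2⟩ := exists_between h
    have ht : t ∈ Ioo 0 V := ⟨(sublevelVol_nonneg _).trans_lt ht1,
      ht2.trans_le ((sublevelVol_le hB s).trans hBV.le)⟩
    have h1 : s + c < α t := mA.reflect_lt (by rwa [hα t ht])
    have h2 : β t < s := mB.reflect_lt (by rwa [hβ t ht])
    have := hc t ht
    linarith
  · exact h
  · exfalso
    obtain ⟨t, ht1, ht2⟩ := exists_between h
    have ht : t ∈ Ioo 0 V := ⟨(sublevelVol_nonneg _).trans_lt ht1,
      ht2.trans_le ((sublevelVol_le hA _).trans hAV.le)⟩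
    have h1 : α t < s + c := mA.reflect_lt (by rwa [hα t ht])
    have h2 : s < β t := mB.reflect_lt (by rwa [hβ t ht])
    have := hc t ht
    linarith

theorem map_restrict_Iic (s : ℝ) :
    (volume.restrict A).map u (Iic s) = volume (A ∩ {x | u x ≤ s}) := by
  rw [Measure.map_apply u.continuous.measurable measurableSet_Iic,
    Measure.restrict_apply (u.continuous.measurable measurableSet_Iic), inter_comm]
  rfl

theorem integral_eq_of_sublevelVol_shift (hA : IsCompact A) (hB : IsCompact B) {c : ℝ}
    (h : ∀ s, sublevelVol u A (s + c) = sublevelVol u B s) :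
    ∫ x in A, u x = (∫ x in B, u x) + c * volume.real B := by
  have : IsFiniteMeasure (volume.restrict A) := ⟨by simpa using hA.measure_lt_top⟩
  have : IsFiniteMeasure (volume.restrict B) := ⟨by simpa using hB.measure_lt_top⟩
  have hmap : (volume.restrict A).map u = ((volume.restrict B).map u).map (fun r => r + c) := by
    refine Measure.ext_of_Iic _ _ fun s => ?_
    rw [map_restrict_Iic, Measure.map_apply (by fun_prop) measurableSet_Iic]
    have : (fun r => r + c) ⁻¹' Iic s = Iic (s - c) := by
      ext r
      simp [le_sub_iff_add_le]
    rw [this, map_restrict_Iic]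
    have h1 := h (s - c)
    rw [sub_add_cancel] at h1
    exact (measureReal_eq_measureReal_iff
      (ne_top_of_le_ne_top hA.measure_lt_top.ne (measure_mono inter_subset_left))
      (ne_top_of_le_ne_top hB.measure_lt_top.ne (measure_mono inter_subset_left))).1 h1
  have hu' := u.continuous.measurable
  have e1 : ∫ x in A, u x = ∫ r, r ∂((volume.restrict A).map u) :=
    (integral_map hu'.aemeasurable aestronglyMeasurable_id).symm
  rw [e1, hmap, integral_map (f := fun r : ℝ => r) (by fun_prop) (by fun_prop),
    integral_map hu'.aemeasurable (by fun_prop),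
    integral_add (u.continuous.continuousOn.integrableOn_compact hB) (integrable_const c)]
  simp [measureReal_def, mul_comm]

theorem sub_mem_of_sublevelVol_eq (hA : IsCompact A) (hAc : Convex ℝ A)
    (hAint : (interior A).Nonempty) (hB : IsCompact B) (hBc : Convex ℝ B) (hB' : B.Nonempty)
    (hV : volume.real A = volume.real B) {v : EuclideanSpace ℝ (Fin n)}
    (h : ∀ u : StrongDual ℝ (EuclideanSpace ℝ (Fin n)), u ≠ 0 → ∀ s,
      sublevelVol u A (s + u v) = sublevelVol u B s) {x : EuclideanSpace ℝ (Fin n)}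
    (hx : x ∈ A) : x - v ∈ B := by
  by_contra hxB
  obtain ⟨u, s, hus, hsu⟩ := geometric_hahn_banach_closed_point hBc hB.isClosed hxB
  obtain ⟨b, hb⟩ := hB'
  have hu : u ≠ 0 := by
    rintro rfl
    have := hus b hb
    simp at this hsu
    linarith
  have h1 := h u hu s
  rw [sublevelVol_eq_volume fun b hb => (hus b hb).le] at h1
  have h2 := sublevelVol_add_superlevel (u := u) hA (s + u v)
  have h3 : volume.real (A ∩ {x | s + u v < u x}) = 0 := by linarith
  have hopen : IsOpen {x | s + u v < u x} := isOpen_lt continuous_const u.continuous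
  have hxmem : x ∈ closure (interior A) := by
    rw [hAc.closure_interior_eq_closure_of_nonempty_interior hAint]
    exact subset_closure hx
  have hxs : x ∈ {x | s + u v < u x} := by
    simp only [map_sub] at hsu
    simp only [mem_ofPred_eq]
    linarith
  obtain ⟨y, hy1, hy2⟩ := mem_closure_iff.1 hxmem _ hopen hxs
  have hpos : 0 < volume (A ∩ {x | s + u v < u x}) :=
    ((isOpen_interior.inter hopen).measure_pos volume ⟨y, hy2, hy1⟩).trans_le
      (measure_mono (inter_subset_inter_left _ interior_subset))
  exact (ENNReal.toReal_pos hpos.ne' (ne_top_of_le_ne_top hA.measure_lt_top.ne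
    (measure_mono inter_subset_left))).ne' h3

/-- The equality case of the Brunn–Minkowski inequality for two convex bodies of equal volume. -/
theorem exists_eq_vadd_of_volume_midpoint_le (hA : IsCompact A) (hAc : Convex ℝ A)
    (hAint : (interior A).Nonempty) (hB : IsCompact B) (hBc : Convex ℝ B)
    (hBint : (interior B).Nonempty) (hV : volume.real A = volume.real B)
    (hC : volume.real ((2⁻¹ : ℝ) • (A + B)) ≤ volume.real A) :
    ∃ x : EuclideanSpace ℝ (Fin n), B = x +ᵥ A := by
  have hCc : IsCompact ((2⁻¹ : ℝ) • (A + B)) := (hA.add hB).smul _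
  have hCV : volume.real ((2⁻¹ : ℝ) • (A + B)) = volume.real A := by
    refine le_antisymm hC ?_
    have := sqrt_mul_sqrt_le_volume hA.measurableSet hB.measurableSet hCc.measurableSet
      hCc.measure_lt_top.ne fun x hx y hy => Set.smul_mem_smul_set (Set.add_mem_add hx hy)
    rwa [← hV, Real.mul_self_sqrt measureReal_nonneg] at this
  have hpos : 0 < volume.real A := ENNReal.toReal_pos
    ((isOpen_interior.measure_pos volume hAint).trans_le (measure_mono interior_subset)).ne'
    hA.measure_lt_top.ne
  set v : EuclideanSpace ℝ (Fin n) :=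
    (volume.real A)⁻¹ • ((∫ x in A, x) - ∫ x in B, x) with hv
  have key : ∀ u : StrongDual ℝ (EuclideanSpace ℝ (Fin n)), u ≠ 0 → ∀ s,
      sublevelVol u A (s + u v) = sublevelVol u B s := by
    intro u hu
    obtain ⟨c, hc⟩ := exists_sublevelVol_shift hu hA hAc hB hBc rfl hV.symm hCV
    have h1 := integral_eq_of_sublevelVol_shift hA hB hc
    rw [u.integral_comp_comm (φ := fun x => x) (continuousOn_id.integrableOn_compact hA),
      u.integral_comp_comm (φ := fun x => x) (continuousOn_id.integrableOn_compact hB),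
      ← hV] at h1
    have : u v = c := by
      rw [hv, map_smul, map_sub]
      rw [h1, smul_eq_mul]
      field_simp
      ring
    rwa [this]
  have key' : ∀ u : StrongDual ℝ (EuclideanSpace ℝ (Fin n)), u ≠ 0 → ∀ s,
      sublevelVol u B (s + u (-v)) = sublevelVol u A s := by
    intro u hu s
    rw [← key u hu]
    simp
  refine ⟨-v, Subset.antisymm (fun y hy => ?_) ?_⟩
  · refine ⟨y + v, ?_, by simp⟩
    simpa using sub_mem_of_sublevelVol_eq hB hBc hBint hA hAc (hAint.mono interior_subset)
      hV.symm key' hy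
  · rintro _ ⟨x, hx, rfl⟩
    have := sub_mem_of_sublevelVol_eq hA hAc hAint hB hBc (hBint.mono interior_subset) hV key hx
    simpa [sub_eq_neg_add] using this

end sublevelVol

theorem pow_add_pow_le_pow {c d g : ℝ} (hc : 0 ≤ c) (hd : 0 ≤ d) (hg : 0 ≤ g)
    (h : d ^ 2 + g ^ 2 ≤ c ^ 2) {n : ℕ} (hn : 2 ≤ n) : d ^ n + g ^ n ≤ c ^ n := by
  have hdc : d ≤ c := le_of_sq_le_sq (by nlinarith) hc
  have hgc : g ≤ c := le_of_sq_le_sq (by nlinarith) hc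
  induction n, hn using Nat.le_induction with
  | base => exact h
  | succ k _ ih =>
    rw [pow_succ, pow_succ, pow_succ]
    have h1 : d ^ k * d ≤ d ^ k * c := by gcongr
    have h2 : g ^ k * g ≤ g ^ k * c := by gcongr
    have h3 : (d ^ k + g ^ k) * c ≤ c ^ k * c := by gcongr
    linarith

theorem prod_le_sum_div_card_pow {ι : Type*} {s : Finset ι} (hs : s.Nonempty) {z : ι → ℝ}
    (hz : ∀ i ∈ s, 0 ≤ z i) : ∏ i ∈ s, z i ≤ ((∑ i ∈ s, z i) / s.card) ^ s.card := by
  have hc : (0 : ℝ) < s.card := by exact_mod_cast hs.card_pos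
  have h := Real.geom_mean_le_arith_mean s (fun _ => 1) z (fun _ _ => zero_le_one)
    (by simpa using hc) hz
  simp only [Real.rpow_one, one_mul, Finset.sum_const, nsmul_eq_mul, mul_one] at h
  have hp : 0 ≤ ∏ i ∈ s, z i := Finset.prod_nonneg hz
  calc ∏ i ∈ s, z i = ((∏ i ∈ s, z i) ^ ((s.card : ℝ)⁻¹)) ^ s.card :=
        (Real.rpow_inv_natCast_pow hp hs.card_pos.ne').symm
    _ ≤ _ := by gcongr

theorem succ_pow_lt_two_pow_mul_pow {k : ℕ} (hk : 2 ≤ k) :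
    ((k : ℝ) + 1) ^ (k + 1) < 2 ^ (k + 1) * (k : ℝ) ^ k := by
  have hk' : (2 : ℝ) ≤ k := by exact_mod_cast hk
  have hs : (0 : ℝ) < (k - 1) / (k + 1) := div_pos (by linarith) (by linarith)
  have h := one_add_mul_self_lt_rpow_one_add (s := ((k : ℝ) - 1) / (k + 1)) (by linarith) hs.ne'
    (p := ((k + 1 : ℕ) : ℝ)) (by push_cast; linarith)
  rw [Real.rpow_natCast] at h
  push_cast at h
  rw [mul_div_cancel₀ _ (by positivity), show (1 : ℝ) + (k - 1) / (k + 1) = 2 * k / (k + 1) by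
    field_simp; ring, div_pow, lt_div_iff₀ (by positivity), mul_pow] at h
  have h' : (k : ℝ) * (k + 1) ^ (k + 1) < k * (2 ^ (k + 1) * k ^ k) := by
    calc _ = (1 + ((k : ℝ) - 1)) * (k + 1) ^ (k + 1) := by ring
      _ < _ := h
      _ = _ := by ring
  exact lt_of_mul_lt_mul_left h' (by linarith)

theorem mul_lt_two_mul_sqrt_div_pow {a b P : ℝ} (ha : 0 < a) (hb : 0 < b) (hba : b ≤ a)
    {k : ℕ} (hk : 2 ≤ k) (hP : P ≤ (b / k) ^ k) :
    a * P < (2 * √(a * b) / (k + 1)) ^ (k + 1) := by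
  have hk' : (0 : ℝ) < k := by exact_mod_cast (by omega : 0 < k)
  refine lt_of_le_of_lt (mul_le_mul_of_nonneg_left hP ha.le) ?_
  refine lt_of_pow_lt_pow_left₀ 2 (by positivity) ?_
  have hq : ((2 * √(a * b) / (k + 1)) ^ (k + 1)) ^ 2 =
      (2 ^ (k + 1)) ^ 2 * (a * b) ^ (k + 1) / ((k + 1 : ℝ) ^ (k + 1)) ^ 2 := by
    rw [div_pow, div_pow, mul_pow, mul_pow, pow_right_comm (√(a * b)), Real.sq_sqrt (by positivity)]
  rw [hq, div_pow, mul_pow, div_pow, ← mul_div_assoc, div_lt_div_iff₀ (by positivity) (by positivity)]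
  have h1 : a ^ 2 * (b ^ k) ^ 2 ≤ (a * b) ^ (k + 1) := by
    obtain ⟨l, rfl⟩ := Nat.exists_eq_add_of_le' (by omega : 1 ≤ k)
    have : b ^ l ≤ a ^ l := by gcongr
    calc a ^ 2 * (b ^ (l + 1)) ^ 2 = a ^ 2 * b ^ (l + 2) * b ^ l := by ring
      _ ≤ a ^ 2 * b ^ (l + 2) * a ^ l := by gcongr
      _ = _ := by ring
  have h2 : (((k : ℝ) + 1) ^ (k + 1)) ^ 2 < (2 ^ (k + 1) * (k : ℝ) ^ k) ^ 2 :=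
    pow_lt_pow_left₀ (succ_pow_lt_two_pow_mul_pow hk) (by positivity) two_ne_zero
  calc a ^ 2 * (b ^ k) ^ 2 * ((k + 1 : ℝ) ^ (k + 1)) ^ 2
      ≤ (a * b) ^ (k + 1) * ((k + 1 : ℝ) ^ (k + 1)) ^ 2 := by gcongr
    _ < (a * b) ^ (k + 1) * (2 ^ (k + 1) * (k : ℝ) ^ k) ^ 2 := by gcongr
    _ = _ := by ring

section FrontierSum

variable {n : ℕ}

theorem volume_real_lt_of_subset_interior (hn : n ≠ 0) {A L : Set (EuclideanSpace ℝ (Fin n))}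
    (hA : IsCompact A) (hL : IsCompact L) (hA' : A.Nonempty) (h : A ⊆ interior L) :
    volume.real A < volume.real L := by
  have : NeZero n := ⟨hn⟩
  have hne : (interior L \ A).Nonempty := by
    by_contra hne
    have hLA : interior L = A := (sdiff_eq_empty.1 (not_nonempty_iff_eq_empty.1 hne)).antisymm h
    rcases isClopen_iff.1 ⟨hA.isClosed, hLA ▸ isOpen_interior⟩ with h0 | h0
    · exact hA'.ne_empty h0
    · exact noncompact_univ _ (h0 ▸ hA)
  have hpos : 0 < volume (interior L \ A) :=
    (isOpen_interior.sdiff hA.isClosed).measure_pos volume hne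
  have hfin : volume (interior L) ≠ ⊤ :=
    ne_top_of_le_ne_top hL.measure_lt_top.ne (measure_mono interior_subset)
  have hpos' : 0 < volume.real (interior L \ A) :=
    ENNReal.toReal_pos hpos.ne' (ne_top_of_le_ne_top hfin (measure_mono sdiff_subset))
  rw [measureReal_sdiff h hA.measurableSet hfin] at hpos'
  linarith [measureReal_mono (interior_subset (s := L)) hL.measure_lt_top.ne (μ := volume)]

theorem exists_sub_notMem_interior (hn : n ≠ 0) {A L : Set (EuclideanSpace ℝ (Fin n))}
    (hA : IsCompact A) (hL : IsCompact L) (hL' : L.Nonempty)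
    (h : volume.real A ≤ volume.real L) (v : EuclideanSpace ℝ (Fin n)) :
    ∃ l ∈ L, v - l ∉ interior A := by
  by_contra! hc
  have hsub : L ⊆ interior ((fun l => v - l) ⁻¹' A) := by
    change L ⊆ interior (Homeomorph.subLeft v ⁻¹' A)
    rw [← (Homeomorph.subLeft v).preimage_interior]
    exact hc
  have hcomp : IsCompact ((fun l => v - l) ⁻¹' A) :=
    (Homeomorph.subLeft v).isCompact_preimage.2 hA
  have hlt := volume_real_lt_of_subset_interior hn hL hcomp hL' hsub
  have hvol : volume ((fun l => v - l) ⁻¹' A) = volume A :=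
    (Measure.measurePreserving_sub_left volume v).measure_preimage hA.measurableSet.nullMeasurableSet
  rw [measureReal_def, measureReal_def, hvol] at hlt
  exact absurd hlt (not_lt.2 h)

variable {ι : Type*} [Fintype ι] {K : ι → Set (EuclideanSpace ℝ (Fin n))}

theorem sum_frontier_subset (hK : ∀ i, IsCompact (K i)) : ∑ i, frontier (K i) ⊆ ∑ i, K i :=
  Set.finsetSum_subset_finsetSum _ _ _ fun i _ => (hK i).isClosed.frontier_subset

theorem volRadius_pos {A : Set (EuclideanSpace ℝ (Fin n))} (hA : IsCompact A)
    (hA' : (interior A).Nonempty) : 0 < volRadius A :=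
  Real.rpow_pos_of_pos (ENNReal.toReal_pos
    ((isOpen_interior.measure_pos volume hA').trans_le (measure_mono interior_subset)).ne'
    hA.measure_lt_top.ne) _

theorem volRadius_pow_le_of_sum_frontier_ne [DecidableEq ι] (hn : 2 ≤ n)
    (hK : ∀ i, IsCompact (K i))
    (hKconv : ∀ i, Convex ℝ (K i)) (hKint : ∀ i, (interior (K i)).Nonempty) {j : ι}
    (hj : ∀ i, volume.real (K i) ≤ volume.real (K j)) (hne : ∑ i, frontier (K i) ≠ ∑ i, K i) :
    ∑ i ∈ Finset.univ.erase j, volRadius (K i) ≤ volRadius (K j) ∧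
    (volRadius (K j) + ∑ i ∈ Finset.univ.erase j, volRadius (K i)) ^ n ≤
      volume.real (∑ i, frontier (K i)) +
        (volRadius (K j) - ∑ i ∈ Finset.univ.erase j, volRadius (K i)) ^ n := by
  have hn0 : n ≠ 0 := by omega
  have hK' : ∀ i, (K i).Nonempty := fun i => (hKint i).mono interior_subset
  set s := Finset.univ.erase j
  set B := ∑ i ∈ s, K i with hB
  set S := ∑ i, frontier (K i) with hS
  have hBc : IsCompact B := isCompact_sum s fun i _ => hK i
  have hB' : B.Nonempty := sum_set_nonempty s fun i _ => hK' i
  have hT : ∑ i, K i = K j + B := (Finset.add_sum_erase _ _ (Finset.mem_univ j)).symm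
  have hS' : S = frontier (K j) + ∑ i ∈ s, frontier (K i) :=
    (Finset.add_sum_erase _ _ (Finset.mem_univ j)).symm
  have hST : S ⊆ K j + B := hT ▸ sum_frontier_subset hK
  have hTc : IsCompact (K j + B) := (hK j).add hBc
  set D := {x | ∀ b ∈ B, x - b ∈ K j} with hD
  have hmem : ∀ x ∈ K j + B, x ∉ S → x ∈ D := fun x hx hxS b hb =>
    interior_subset (sub_mem_interior_of_notMem_sum_frontier
      (by rw [rank_eq_card_basis (EuclideanSpace.basisFun (Fin n) ℝ).toBasis]; simpa using (by omega : 1 < n))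
      hK hKconv hKint (hK j) (hKconv j)
      (fun i v => exists_sub_notMem_interior hn0 (hK i) (hK j) (hK' j) (hj i) v)
      s x hx (hS' ▸ hxS) b hb)
  obtain ⟨b₀, hb₀⟩ := hB'
  have hDc : IsCompact D := by
    refine ((hK j).add (isCompact_singleton (x := b₀))).of_isClosed_subset ?_ fun x hx =>
      ⟨x - b₀, hx b₀ hb₀, b₀, rfl, by simp⟩
    rw [hD, show {x | ∀ b ∈ B, x - b ∈ K j} = ⋂ b ∈ B, (fun x => x - b) ⁻¹' K j by ext; simp]
    exact isClosed_biInter fun b _ => (hK j).isClosed.preimage (by fun_prop)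
  obtain ⟨x, hxT, hxS⟩ : ∃ x ∈ K j + B, x ∉ S := by
    by_contra! h
    exact hne ((hST.antisymm h).trans hT.symm)
  have hDK : D + -B ⊆ K j := by
    rintro _ ⟨d, hd, b, hb, rfl⟩
    simpa using hd (-b) hb
  have hb : ∑ i ∈ s, volRadius (K i) ≤ volRadius B :=
    sum_volRadius_le hn0 s (fun i _ => hK i) fun i _ => hK' i
  have hDb : volRadius D + ∑ i ∈ s, volRadius (K i) ≤ volRadius (K j) := by
    have h1 := volRadius_add_le hn0 hDc hBc.neg ⟨x, hmem x hxT hxS⟩ (Set.Nonempty.neg ⟨b₀, hb₀⟩)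
    have h2 : volRadius (-B) = volRadius B := volRadius_congr (Measure.measure_neg _ _)
    have h3 := volRadius_mono hDK (hK j).measure_lt_top.ne
    linarith
  have hD0 := volRadius_nonneg (A := D)
  refine ⟨by linarith, ?_⟩
  have h1 : volRadius (K j) + ∑ i ∈ s, volRadius (K i) ≤ volRadius (K j + B) :=
    (add_le_add_right hb _).trans (volRadius_add_le hn0 (hK j) hBc (hK' j) ⟨b₀, hb₀⟩)
  have h2 : 0 ≤ ∑ i ∈ s, volRadius (K i) := Finset.sum_nonneg fun i _ => volRadius_nonneg
  calc _ ≤ volRadius (K j + B) ^ n :=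
        pow_le_pow_left₀ (add_nonneg volRadius_nonneg h2) h1 n
    _ = volume.real (K j + B) := volRadius_pow hn0
    _ ≤ volume.real (S ∪ D) := measureReal_mono (fun y hy => by
        by_cases h : y ∈ S
        · exact Or.inl h
        · exact Or.inr (hmem y hy h))
        (measure_union_lt_top ((measure_mono hST).trans_lt hTc.measure_lt_top)
          hDc.measure_lt_top).ne
    _ ≤ volume.real S + volume.real D := measureReal_union_le _ _
    _ ≤ _ := by
      rw [← volRadius_pow hn0 (A := D)]
      gcongr
      linarith

end FrontierSum

section Average

variable {n : ℕ} {ι : Type*} [Fintype ι] {K : ι → Set (EuclideanSpace ℝ (Fin n))}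

theorem prod_volume_rpow (hn : n ≠ 0) (p : ℝ) :
    (∏ i, volume.real (K i)) ^ p = ((∏ i, volRadius (K i)) ^ p) ^ n := by
  have h0 : 0 ≤ ∏ i, volRadius (K i) := Finset.prod_nonneg fun i _ => volRadius_nonneg
  rw [← Real.rpow_natCast, ← Real.rpow_mul h0, mul_comm p, Real.rpow_mul h0, Real.rpow_natCast,
    ← Finset.prod_pow]
  simp_rw [volRadius_pow hn]

theorem prod_volume_rpow_lt_of_sum_frontier_ne (hn : 2 ≤ n) (hι : 2 < Fintype.card ι)
    (hK : ∀ i, IsCompact (K i)) (hKconv : ∀ i, Convex ℝ (K i))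
    (hKint : ∀ i, (interior (K i)).Nonempty) (hne : ∑ i, frontier (K i) ≠ ∑ i, K i) :
    (∏ i, volume.real (K i)) ^ ((1 : ℝ) / Fintype.card ι) <
      volume.real ((Fintype.card ι : ℝ)⁻¹ • ∑ i, frontier (K i)) := by
  classical
  have hn0 : n ≠ 0 := by omega
  have : Nonempty ι := Fintype.card_pos_iff.1 (by omega)
  obtain ⟨j, hj⟩ := Finite.exists_max fun i => volume.real (K i)
  obtain ⟨hba, hvol⟩ := volRadius_pow_le_of_sum_frontier_ne hn hK hKconv hKint hj hne
  have hprod := Finset.mul_prod_erase Finset.univ (fun i => volRadius (K i)) (Finset.mem_univ j)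
  have hcard : (Finset.univ.erase j).card + 1 = Fintype.card ι :=
    Finset.card_erase_add_one (Finset.mem_univ j)
  set s := Finset.univ.erase j
  set a := volRadius (K j)
  set b := ∑ i ∈ s, volRadius (K i)
  have hs : s.Nonempty := Finset.card_pos.1 (by omega)
  have ha : 0 < a := volRadius_pos (hK j) (hKint j)
  have hb : 0 < b := Finset.sum_pos (fun i _ => volRadius_pos (hK i) (hKint i)) hs
  have hP : ∏ i ∈ s, volRadius (K i) ≤ (b / s.card) ^ s.card :=
    prod_le_sum_div_card_pow hs fun i _ => volRadius_nonneg
  have hlt := mul_lt_two_mul_sqrt_div_pow ha hb hba (by omega) hP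
  have hgap : (a - b) ^ n + (2 * √(a * b)) ^ n ≤ (a + b) ^ n := by
    refine pow_add_pow_le_pow (by positivity) (by linarith) (by positivity) ?_ hn
    rw [mul_pow, Real.sq_sqrt (by positivity)]
    linarith
  have hm : ((s.card : ℝ) + 1) = Fintype.card ι := by exact_mod_cast hcard
  rw [hm, hcard, hprod] at hlt
  have hm0 : (0 : ℝ) < Fintype.card ι := by exact_mod_cast (by omega : 0 < Fintype.card ι)
  rw [prod_volume_rpow hn0, volume_real_smul, abs_of_pos (inv_pos.2 hm0)]
  have hroot : (∏ i, volRadius (K i)) ^ ((1 : ℝ) / Fintype.card ι) <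
      2 * √(a * b) / Fintype.card ι := by
    have h0 : 0 ≤ ∏ i, volRadius (K i) := Finset.prod_nonneg fun i _ => volRadius_nonneg
    refine lt_of_pow_lt_pow_left₀ (Fintype.card ι) (by positivity) ?_
    rwa [one_div, Real.rpow_inv_natCast_pow h0 (by omega)]
  calc _ < (2 * √(a * b) / Fintype.card ι) ^ n :=
        pow_lt_pow_left₀ hroot (Real.rpow_nonneg
          (Finset.prod_nonneg fun i _ => volRadius_nonneg) _) hn0
    _ = ((Fintype.card ι : ℝ)⁻¹) ^ n * (2 * √(a * b)) ^ n := by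
      rw [← mul_pow, inv_mul_eq_div]
    _ ≤ _ := by
      gcongr
      linarith

theorem eq_of_sum_div_card_le_prod_rpow {z : ι → ℝ} (hι : 0 < Fintype.card ι) (hz : ∀ i, 0 ≤ z i)
    (h : (∑ i, z i) / Fintype.card ι ≤ (∏ i, z i) ^ ((1 : ℝ) / Fintype.card ι)) (i : ι) :
    z i = (∑ i, z i) / Fintype.card ι := by
  have hm0 : (0 : ℝ) < Fintype.card ι := by exact_mod_cast hι
  have hw : ∑ _i : ι, (1 : ℝ) / Fintype.card ι = 1 := by
    simp [hm0.ne']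
  have e : ∑ i, (1 : ℝ) / Fintype.card ι * z i = (∑ i, z i) / Fintype.card ι := by
    rw [← Finset.mul_sum]; ring
  have h1 := Real.geom_mean_le_arith_mean_weighted Finset.univ (fun _ : ι => (1 : ℝ) / Fintype.card ι)
    z (fun _ _ => by positivity) hw fun i _ => hz i
  have h2 := (Real.geom_mean_eq_arith_mean_weighted_iff_of_pos' Finset.univ
    (fun _ : ι => (1 : ℝ) / Fintype.card ι) z (fun _ _ => by positivity) hw fun i _ => hz i).1
  rw [Real.finsetProd_rpow _ _ fun i _ => hz i, e] at h1 h2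
  exact h2 (h1.antisymm h) i (Finset.mem_univ i)

theorem exists_eq_vadd_of_volume_sum_le (hn : n ≠ 0) (hι : 0 < Fintype.card ι)
    (hK : ∀ i, IsCompact (K i)) (hKconv : ∀ i, Convex ℝ (K i))
    (hKint : ∀ i, (interior (K i)).Nonempty)
    (h : volume.real ((Fintype.card ι : ℝ)⁻¹ • ∑ i, K i) ≤
      (∏ i, volume.real (K i)) ^ ((1 : ℝ) / Fintype.card ι)) (i j : ι) :
    ∃ x : EuclideanSpace ℝ (Fin n), K j = x +ᵥ K i := by
  classical
  have hm0 : (0 : ℝ) < Fintype.card ι := by exact_mod_cast hι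
  have hK' : ∀ i, (K i).Nonempty := fun i => (hKint i).mono interior_subset
  rw [prod_volume_rpow hn, volume_real_smul, abs_of_pos (inv_pos.2 hm0), ← volRadius_pow hn,
    ← mul_pow, inv_mul_eq_div] at h
  replace h := le_of_pow_le_pow_left₀ hn (Real.rpow_nonneg
    (Finset.prod_nonneg fun i _ => volRadius_nonneg) _) h
  have hsum := sum_volRadius_le hn Finset.univ (fun i _ => hK i) fun i _ => hK' i
  have heq := eq_of_sum_div_card_le_prod_rpow hι (fun i => volRadius_nonneg (A := K i))
    ((div_le_div_of_nonneg_right hsum hm0.le).trans h)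
  by_cases hij : i = j
  · exact ⟨0, by simp [hij]⟩
  have hle : volRadius (∑ i, K i) ≤ ∑ i, volRadius (K i) := by
    have : (∏ i, volRadius (K i)) ^ ((1 : ℝ) / Fintype.card ι) =
        (∑ i, volRadius (K i)) / Fintype.card ι := by
      set c := (∑ i, volRadius (K i)) / Fintype.card ι with hc
      have hc0 : 0 ≤ c := by rw [← heq i]; exact volRadius_nonneg
      rw [Finset.prod_congr rfl fun i _ => heq i, Finset.prod_const, Finset.card_univ, one_div,
        Real.pow_rpow_inv_natCast hc0 hι.ne']
    rw [this] at h
    exact (div_le_div_iff_of_pos_right hm0).1 h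
  have hpair : volRadius (K i + K j) ≤ volRadius (K i) + volRadius (K j) := by
    set s := (Finset.univ.erase i).erase j
    have hj : j ∈ Finset.univ.erase i := Finset.mem_erase.2 ⟨Ne.symm hij, Finset.mem_univ j⟩
    have e1 : ∑ i, K i = (K i + K j) + ∑ i ∈ s, K i := by
      rw [add_assoc, Finset.add_sum_erase _ _ hj, Finset.add_sum_erase _ _ (Finset.mem_univ i)]
    have e2 : ∑ i, volRadius (K i) =
        (volRadius (K i) + volRadius (K j)) + ∑ i ∈ s, volRadius (K i) := by
      rw [add_assoc, Finset.add_sum_erase _ (fun i => volRadius (K i)) hj,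
        Finset.add_sum_erase _ (fun i => volRadius (K i)) (Finset.mem_univ i)]
    have h1 := volRadius_add_le hn ((hK i).add (hK j)) (isCompact_sum s fun i _ => hK i)
      ((hK' i).add (hK' j)) (sum_set_nonempty s fun i _ => hK' i)
    have h2 := sum_volRadius_le hn s (fun i _ => hK i) fun i _ => hK' i
    rw [e1, e2] at hle
    linarith
  have hr : volRadius (K j) = volRadius (K i) := (heq j).trans (heq i).symm
  refine exists_eq_vadd_of_volume_midpoint_le (hK i) (hKconv i) (hKint i) (hK j) (hKconv j)
    (hKint j) ?_ ?_
  · rw [← volRadius_pow hn, ← volRadius_pow hn (A := K j), hr]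
  · rw [volume_real_smul, ← volRadius_pow hn, ← volRadius_pow hn (A := K i), ← mul_pow]
    refine pow_le_pow_left₀ (mul_nonneg (abs_nonneg _) volRadius_nonneg) ?_ n
    rw [abs_of_pos (by norm_num)]
    linarith

theorem sum_vadd_eq {ι E : Type*} [AddCommGroup E] [Module ℝ E] {L : Set E} (hL : Convex ℝ L)
    (hL' : L.Nonempty) (x : ι → E) (s : Finset ι) :
    ∑ i ∈ s, (x i +ᵥ L) = (∑ i ∈ s, x i) +ᵥ ((s.card : ℝ) • L) := by
  classical
  induction s using Finset.induction_on with
  | empty => simp [hL']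
  | insert i s hi ih =>
    rw [Finset.sum_insert hi, Finset.sum_insert hi, ih, Finset.card_insert_of_notMem hi,
      vadd_add_vadd_comm, Nat.cast_add, Nat.cast_one, add_comm (s.card : ℝ) 1,
      hL.add_smul zero_le_one s.card.cast_nonneg, one_smul]

theorem volume_sum_of_vadd (hι : 0 < Fintype.card ι) (hKconv : ∀ i, Convex ℝ (K i))
    (hK' : ∀ i, (K i).Nonempty)
    (h : ∀ i j, ∃ x : EuclideanSpace ℝ (Fin n), K j = x +ᵥ K i) :
    volume.real ((Fintype.card ι : ℝ)⁻¹ • ∑ i, K i) =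
      (∏ i, volume.real (K i)) ^ ((1 : ℝ) / Fintype.card ι) := by
  have hm0 : (0 : ℝ) < Fintype.card ι := by exact_mod_cast hι
  obtain ⟨j⟩ : Nonempty ι := Fintype.card_pos_iff.1 hι
  choose x hx using h j
  have hvol : ∀ i, volume.real (K i) = volume.real (K j) := fun i => by
    rw [hx i, measureReal_def, measureReal_def, measure_vadd]
  have hsum : ∑ i, K i = (∑ i, x i) +ᵥ ((Fintype.card ι : ℝ) • K j) := by
    rw [Finset.sum_congr rfl fun i _ => hx i, sum_vadd_eq (hKconv j) (hK' j), Finset.card_univ]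
  rw [Finset.prod_congr rfl fun i _ => hvol i, Finset.prod_const, Finset.card_univ, one_div,
    Real.pow_rpow_inv_natCast measureReal_nonneg hι.ne', hsum, volume_real_smul, measureReal_def,
    measure_vadd, ← measureReal_def, volume_real_smul, ← mul_assoc, ← mul_pow, ← abs_mul,
    inv_mul_cancel₀ hm0.ne', abs_one, one_pow, one_mul]

theorem sum_frontier_eq_of_vadd (hn : 2 ≤ n) (hι : 2 < Fintype.card ι)
    (hK : ∀ i, IsCompact (K i)) (hKconv : ∀ i, Convex ℝ (K i))
    (hKint : ∀ i, (interior (K i)).Nonempty)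
    (h : ∀ i j, ∃ x : EuclideanSpace ℝ (Fin n), K j = x +ᵥ K i) :
    ∑ i, frontier (K i) = ∑ i, K i := by
  classical
  by_contra hne
  obtain ⟨j⟩ : Nonempty ι := Fintype.card_pos_iff.1 (by omega)
  have hvol : ∀ i, volume (K i) = volume (K j) := fun i => by
    obtain ⟨x, hx⟩ := h j i
    rw [hx, measure_vadd]
  have hba := (volRadius_pow_le_of_sum_frontier_ne hn hK hKconv hKint
    (fun i => (by rw [measureReal_def, measureReal_def, hvol i] :
      volume.real (K i) ≤ volume.real (K j))) hne).1
  rw [Finset.sum_congr rfl fun i _ => volRadius_congr (hvol i), Finset.sum_const,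
    nsmul_eq_mul] at hba
  have hcard : (Finset.univ.erase j).card + 1 = Fintype.card ι :=
    Finset.card_erase_add_one (Finset.mem_univ j)
  have h2 : (2 : ℝ) ≤ (Finset.univ.erase j).card := by
    exact_mod_cast (by omega : 2 ≤ (Finset.univ.erase j).card)
  nlinarith [volRadius_pos (hK j) (hKint j)]

theorem volume_average_sum_frontier_eq_iff (hn : 2 ≤ n) (hι : 2 < Fintype.card ι)
    (hK : ∀ i, IsCompact (K i)) (hKconv : ∀ i, Convex ℝ (K i))
    (hKint : ∀ i, (interior (K i)).Nonempty) :
    volume.real ((Fintype.card ι : ℝ)⁻¹ • ∑ i, frontier (K i)) =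
        (∏ i, volume.real (K i)) ^ ((1 : ℝ) / Fintype.card ι) ↔
      ∀ i j, ∃ x : EuclideanSpace ℝ (Fin n), K j = x +ᵥ K i := by
  constructor
  · intro h
    have hST : ∑ i, frontier (K i) = ∑ i, K i := by
      by_contra hne
      exact (prod_volume_rpow_lt_of_sum_frontier_ne hn hι hK hKconv hKint hne).ne' h
    rw [hST] at h
    exact exists_eq_vadd_of_volume_sum_le (by omega) (by omega) hK hKconv hKint h.le
  · intro h
    rw [sum_frontier_eq_of_vadd hn hι hK hKconv hKint h]
    exact volume_sum_of_vadd (by omega) hKconv (fun i => (hKint i).mono interior_subset) h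

end Average

end ConvexBoundary

theorem multi_boundary_sum_average_equality_cases (n m : ℕ) (hn : 2 ≤ n) (hm : 2 < m)
    (K : Fin m → Set (EuclideanSpace ℝ (Fin n)))
    (hK : ∀ i, IsCompact (K i)) (hKconv : ∀ i, Convex ℝ (K i))
    (hKint : ∀ i, (interior (K i)).Nonempty) :
    (volume ((m:ℝ)⁻¹ • (∑ i, frontier (K i)))).toReal =
      (∏ i, (volume (K i)).toReal) ^ ((1:ℝ)/m) ↔
    (∀ i j, ∃ x : EuclideanSpace ℝ (Fin n), K j = x +ᵥ K i) := by
  have h := ConvexBoundary.volume_average_sum_frontier_eq_iff (ι := Fin m) hn (by simpa using hm)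
    hK hKconv hKint
  rwa [Fintype.card_fin] at h
end

section
/- Let n ≥ 2, let K, T ⊆ ℝⁿ be compact sets each with connected boundary, and let λ ∈ (0, 1). Then vol(λ∂K + (1−λ)∂T) · vol(λ∂T + (1−λ)∂K) ≥ vol(K)·vol(T)·(1 − |1 − 2λ|ⁿ)². -/
open MeasureTheory Pointwise

theorem Real.volume_add_volume_le_volume_add {X Y : Set ℝ} (hX : IsCompact X) (hY : IsCompact Y)
    (hX0 : X.Nonempty) (hY0 : Y.Nonempty) : volume X + volume Y ≤ volume (X + Y) := by
  obtain ⟨M, hM⟩ := hX.exists_isGreatest hX0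
  obtain ⟨m, hm⟩ := hY.exists_isLeast hY0
  have hXm : volume ((fun x => x + m) '' X) = volume X := by
    rw [Set.image_add_right, measure_preimage_add_right]
  have hYM : volume ((fun y => M + y) '' Y) = volume Y := by
    rw [Set.image_add_left, measure_preimage_add]
  have hdisj : AEDisjoint volume ((fun x => x + m) '' X) ((fun y => M + y) '' Y) := by
    refine measure_mono_null (t := {M + m}) ?_ (by simp)
    rintro _ ⟨⟨x, hx, rfl⟩, ⟨y, hy, hxy⟩⟩
    have h1 := hM.2 hx
    have h2 := hm.2 hy
    simp only [Set.mem_singleton_iff] at hxy ⊢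
    linarith
  rw [← hXm, ← hYM, ← measure_union₀ (hY.image (by fun_prop)).measurableSet.nullMeasurableSet
    hdisj]
  apply measure_mono
  rintro _ (⟨x, hx, rfl⟩ | ⟨y, hy, rfl⟩)
  · exact Set.add_mem_add hx hm.1
  · exact Set.add_mem_add hM.1 hy

theorem MeasurableSet.measure_add_le_of_forall_isCompact {X : Set ℝ} (hX : MeasurableSet X)
    (hX0 : X.Nonempty) {y z : ENNReal}
    (h : ∀ K ⊆ X, IsCompact K → K.Nonempty → volume K + y ≤ z) : volume X + y ≤ z := by
  obtain ⟨x, hx⟩ := hX0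
  have hyz : y ≤ z := le_add_self.trans
    (h {x} (by simpa using hx) isCompact_singleton (Set.singleton_nonempty x))
  rcases eq_or_ne y ⊤ with rfl | hy
  · simpa using hyz
  apply add_le_of_le_tsub_right_of_le hyz
  rw [hX.measure_eq_iSup_isCompact]
  refine iSup₂_le fun K hKX => iSup_le fun hK => ?_
  apply ENNReal.le_sub_of_add_le_right hy
  calc volume K + y ≤ volume (insert x K) + y := by gcongr; exact Set.subset_insert x K
    _ ≤ z := h _ (Set.insert_subset hx hKX) (hK.insert x) (Set.insert_nonempty x K)

theorem Real.volume_add_volume_le_of_add_subset {X Y Z : Set ℝ} (hX : MeasurableSet X)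
    (hY : MeasurableSet Y) (hX0 : X.Nonempty) (hY0 : Y.Nonempty) (h : X + Y ⊆ Z) :
    volume X + volume Y ≤ volume Z := by
  refine hX.measure_add_le_of_forall_isCompact hX0 fun K hKX hK hK0 => ?_
  rw [add_comm]
  refine hY.measure_add_le_of_forall_isCompact hY0 fun L hLY hL hL0 => ?_
  rw [add_comm]
  exact (Real.volume_add_volume_le_volume_add hK hL hK0 hL0).trans
    (measure_mono ((Set.add_subset_add hKX hLY).trans h))

/-- The one-dimensional superlevel-set form of the Prékopa-Leindler inequality. -/
theorem lintegral_add_lintegral_le_of_superlevel {f g h : ℝ → ℝ} (hf : Measurable f)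
    (hg : Measurable g) (hh : Measurable h) (hf0 : ∀ x, 0 ≤ f x) (hg0 : ∀ x, 0 ≤ g x)
    (hh0 : ∀ x, 0 ≤ h x) (hf1 : ∀ x, f x ≤ 1) (hg1 : ∀ x, g x ≤ 1)
    (hfs : ∀ s < 1, ∃ x, s < f x) (hgs : ∀ s < 1, ∃ x, s < g x) {a b : ℝ} (ha : 0 < a)
    (hb : 0 < b)
    (hfgh : ∀ s, 0 < s → ∀ x y, s < f x → s < g y → s < h (a * x + b * y)) :
    ENNReal.ofReal a * (∫⁻ x, ENNReal.ofReal (f x)) +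
      ENNReal.ofReal b * (∫⁻ x, ENNReal.ofReal (g x)) ≤ ∫⁻ x, ENNReal.ofReal (h x) := by
  rw [lintegral_eq_lintegral_meas_lt volume (.of_forall hf0) hf.aemeasurable,
    lintegral_eq_lintegral_meas_lt volume (.of_forall hg0) hg.aemeasurable,
    lintegral_eq_lintegral_meas_lt volume (.of_forall hh0) hh.aemeasurable]
  have hmeas : ∀ u : ℝ → ℝ, Measurable (fun t => volume {x | t < u x}) := fun u =>
    Antitone.measurable fun s t hst => measure_mono fun x (hx : t < u x) => hst.trans_lt hx
  rw [← lintegral_const_mul _ (hmeas f), ← lintegral_const_mul _ (hmeas g),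
    ← lintegral_add_left ((hmeas f).const_mul _)]
  refine setLIntegral_mono (hmeas h) fun s (hs : 0 < s) => ?_
  rcases le_or_gt 1 s with hs1 | hs1
  · have h1 : {x | s < f x} = ∅ := by ext x; simpa using (hf1 x).trans hs1
    have h2 : {x | s < g x} = ∅ := by ext x; simpa using (hg1 x).trans hs1
    simp [h1, h2]
  have key : ∀ (u : ℝ → ℝ) {c : ℝ}, 0 < c →
      ENNReal.ofReal c * volume {x | s < u x} = volume (c • {x | s < u x}) := fun u c hc => by
    rw [Measure.addHaar_smul_of_nonneg _ hc.le]; simp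
  rw [key f ha, key g hb]
  refine Real.volume_add_volume_le_of_add_subset
    ((measurableSet_lt measurable_const hf).const_smul₀ a)
    ((measurableSet_lt measurable_const hg).const_smul₀ b)
    (Set.Nonempty.smul_set (hfs s hs1)) (Set.Nonempty.smul_set (hgs s hs1)) ?_
  rintro _ ⟨_, ⟨x, hx, rfl⟩, _, ⟨y, hy, rfl⟩, rfl⟩
  exact hfgh s hs x y hx hy

/-- The dimension-free (multiplicative) form of the Brunn-Minkowski inequality on compact sets. -/
def MultiplicativeBrunnMinkowski (E : Type*) [AddCommGroup E] [Module ℝ E] [TopologicalSpace E]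
    [MeasureSpace E] : Prop :=
  ∀ A B : Set E, IsCompact A → IsCompact B → A.Nonempty → B.Nonempty →
    ∀ a b : ℝ, 0 < a → 0 < b → a + b = 1 →
      volume.real A ^ a * volume.real B ^ b ≤ volume.real (a • A + b • B)

theorem MultiplicativeBrunnMinkowski.of_measurePreserving {E F : Type*}
    [AddCommGroup E] [Module ℝ E] [TopologicalSpace E] [MeasureSpace E]
    [AddCommGroup F] [Module ℝ F] [TopologicalSpace F] [MeasureSpace F]
    (hE : MultiplicativeBrunnMinkowski E) (e : E ≃L[ℝ] F)
    (he : MeasurePreserving e.symm) (hme : MeasurableEmbedding e.symm) :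
    MultiplicativeBrunnMinkowski F := by
  intro A B hA hB hA0 hB0 a b ha hb hab
  have hvol : ∀ s : Set F, volume.real (e.symm '' s) = volume.real s := fun s => by
    rw [measureReal_def, ← he.measure_preimage_emb hme,
      Set.preimage_image_eq _ e.symm.injective, measureReal_def]
  have := hE (e.symm '' A) (e.symm '' B) (hA.image e.symm.continuous)
    (hB.image e.symm.continuous) (hA0.image _) (hB0.image _) a b ha hb hab
  rw [hvol, hvol, ← Set.image_smul_comm _ _ _ (map_smul e.symm a),
    ← Set.image_smul_comm _ _ _ (map_smul e.symm b), ← Set.image_add, hvol] at this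
  exact this

theorem IsCompact.prodMk_preimage {X Y : Type*} [TopologicalSpace X] [TopologicalSpace Y]
    [T1Space X] {A : Set (X × Y)} (hA : IsCompact A) (x : X) : IsCompact (Prod.mk x ⁻¹' A) := by
  have : Prod.mk x ⁻¹' A = Prod.snd '' (A ∩ Prod.fst ⁻¹' {x}) := by
    ext y; simp
  rw [this]
  exact (hA.inter_right (isClosed_singleton.preimage continuous_fst)).image continuous_snd

theorem IsCompact.lintegral_ofReal_slice {F : Type*} [NormedAddCommGroup F] [MeasureSpace F]
    [BorelSpace F] [SecondCountableTopology F] [SFinite (volume : Measure F)]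
    [IsFiniteMeasureOnCompacts (volume : Measure F)]
    {A : Set (ℝ × F)} (hA : IsCompact A) :
    ∫⁻ x, ENNReal.ofReal (volume.real (Prod.mk x ⁻¹' A)) = volume A := by
  rw [Measure.volume_eq_prod, Measure.prod_apply hA.measurableSet]
  refine lintegral_congr fun x => ?_
  exact ofReal_measureReal (hA.prodMk_preimage x).measure_ne_top

theorem MultiplicativeBrunnMinkowski.prod {F : Type*} [NormedAddCommGroup F]
    [NormedSpace ℝ F] [MeasureSpace F]
    [BorelSpace F] [SecondCountableTopology F] [SFinite (volume : Measure F)]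
    [IsFiniteMeasureOnCompacts (volume : Measure F)]
    (hF : MultiplicativeBrunnMinkowski F) :
    MultiplicativeBrunnMinkowski (ℝ × F) := by
  intro A B hA hB hA0 hB0 a b ha hb hab
  have hAB : IsCompact (a • A + b • B) := (hA.smul a).add (hB.smul b)
  set C := a • A + b • B with hC
  let f : Set (ℝ × F) → ℝ → ℝ := fun S x => volume.real (Prod.mk x ⁻¹' S)
  have hmeas : ∀ S, IsCompact S → Measurable (f S) := fun S hS =>
    (measurable_measure_prodMk_left hS.measurableSet).ennreal_toReal
  have hbdd : ∀ S, IsCompact S → BddAbove (Set.range (f S)) := fun S hS => by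
    refine ⟨volume.real (Prod.snd '' S), ?_⟩
    rintro _ ⟨x, rfl⟩
    refine measureReal_mono ?_ (hS.image continuous_snd).measure_ne_top
    exact fun y hy => ⟨(x, y), hy, rfl⟩
  have hnn : ∀ S x, 0 ≤ f S x := fun S x => measureReal_nonneg
  have hlint : ∀ S, IsCompact S → ∀ c : ℝ, 0 < c →
      ∫⁻ x, ENNReal.ofReal (f S x / c) = ENNReal.ofReal (volume.real S / c) := fun S hS c hc => by
    simp_rw [div_eq_inv_mul, ENNReal.ofReal_mul (inv_nonneg.2 hc.le)]
    rw [lintegral_const_mul _ (hmeas S hS).ennreal_ofReal, hS.lintegral_ofReal_slice,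
      ofReal_measureReal hS.measure_ne_top]
  have hzero : ∀ S, IsCompact S → (⨆ x, f S x) ≤ 0 → volume.real S = 0 := fun S hS h0 => by
    have hz : ∀ x, f S x = 0 := fun x =>
      le_antisymm ((le_ciSup (hbdd S hS) x).trans h0) (hnn S x)
    have := hlint S hS 1 one_pos
    simp only [hz, ENNReal.ofReal_zero, lintegral_zero, div_one] at this
    exact le_antisymm (ENNReal.ofReal_eq_zero.1 this.symm) measureReal_nonneg
  set M := ⨆ x, f A x with hM
  set N := ⨆ x, f B x with hN
  rcases le_or_gt M 0 with hM0 | hM0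
  · rw [hzero A hA hM0, Real.zero_rpow ha.ne', zero_mul]; exact measureReal_nonneg
  rcases le_or_gt N 0 with hN0 | hN0
  · rw [hzero B hB hN0, Real.zero_rpow hb.ne', mul_zero]; exact measureReal_nonneg
  have hne : ∀ S x, 0 < f S x → (Prod.mk x ⁻¹' S).Nonempty := fun S x h => by
    by_contra h0
    rw [Set.not_nonempty_iff_eq_empty] at h0
    simp [f, h0] at h
  have hslice : ∀ x y, 0 < f A x → 0 < f B y → f A x ^ a * f B y ^ b ≤ f C (a * x + b * y) := by
    intro x y hx hy
    refine (hF _ _ (hA.prodMk_preimage x) (hB.prodMk_preimage y) (hne A x hx) (hne B y hy)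
      a b ha hb hab).trans (measureReal_mono ?_ (hAB.prodMk_preimage _).measure_ne_top)
    rintro _ ⟨_, ⟨u, hu, rfl⟩, _, ⟨v, hv, rfl⟩, rfl⟩
    exact ⟨_, ⟨_, hu, rfl⟩, _, ⟨_, hv, rfl⟩, rfl⟩
  set Q := M ^ a * N ^ b with hQ
  have hQ0 : 0 < Q := by positivity
  have key := lintegral_add_lintegral_le_of_superlevel (f := fun x => f A x / M)
    (g := fun x => f B x / N) (h := fun x => f C x / Q) ((hmeas A hA).div_const _)
    ((hmeas B hB).div_const _) ((hmeas C hAB).div_const _)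
    (fun x => div_nonneg (hnn _ _) hM0.le) (fun x => div_nonneg (hnn _ _) hN0.le)
    (fun x => div_nonneg (hnn _ _) hQ0.le)
    (fun x => (div_le_one hM0).2 (le_ciSup (hbdd A hA) x))
    (fun x => (div_le_one hN0).2 (le_ciSup (hbdd B hB) x))
    (fun s hs => by
      obtain ⟨x, hx⟩ := exists_lt_of_lt_ciSup (show s * M < ⨆ x, f A x by
        rw [← hM]; exact mul_lt_of_lt_one_left hM0 hs)
      exact ⟨x, (lt_div_iff₀ hM0).2 hx⟩)
    (fun s hs => by
      obtain ⟨x, hx⟩ := exists_lt_of_lt_ciSup (show s * N < ⨆ x, f B x by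
        rw [← hN]; exact mul_lt_of_lt_one_left hN0 hs)
      exact ⟨x, (lt_div_iff₀ hN0).2 hx⟩) ha hb
    (fun s hs x y hx hy => by
      rw [lt_div_iff₀ hM0] at hx
      rw [lt_div_iff₀ hN0] at hy
      rw [lt_div_iff₀ hQ0]
      calc s * Q = (s * M) ^ a * (s * N) ^ b := by
            rw [Real.mul_rpow hs.le hM0.le, Real.mul_rpow hs.le hN0.le, hQ]
            nth_rw 1 [← Real.rpow_one s, ← hab, Real.rpow_add hs]
            ring
        _ < f A x ^ a * f B y ^ b := by gcongr
        _ ≤ _ := hslice x y ((mul_pos hs hM0).trans hx) ((mul_pos hs hN0).trans hy))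
  rw [hlint A hA M hM0, hlint B hB N hN0, hlint C hAB Q hQ0, ← ENNReal.ofReal_mul ha.le,
    ← ENNReal.ofReal_mul hb.le, ← ENNReal.ofReal_add (by positivity) (by positivity),
    ENNReal.ofReal_le_ofReal_iff (by positivity), le_div_iff₀ hQ0] at key
  refine le_trans ?_ key
  have amgm := Real.geom_mean_le_arith_mean2_weighted ha.le hb.le
    (div_nonneg (measureReal_nonneg (μ := volume) (s := A)) hM0.le)
    (div_nonneg (measureReal_nonneg (μ := volume) (s := B)) hN0.le) hab
  refine le_trans (le_of_eq ?_) (mul_le_mul_of_nonneg_right amgm hQ0.le)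
  rw [Real.div_rpow measureReal_nonneg hM0.le, Real.div_rpow measureReal_nonneg hN0.le, hQ]
  field_simp

theorem multiplicativeBrunnMinkowski_pi (n : ℕ) : MultiplicativeBrunnMinkowski (Fin n → ℝ) := by
  induction n with
  | zero =>
    intro A B hA hB hA0 hB0 a b ha hb hab
    have hone : ∀ S : Set (Fin 0 → ℝ), S.Nonempty → volume.real S = 1 := fun S hS => by
      rw [Subsingleton.eq_univ_of_nonempty hS]
      simp [measureReal_def, volume_pi]
    rw [hone A hA0, hone B hB0, hone _ (hA0.smul_set.add hB0.smul_set)]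
    simp
  | succ n ih =>
    exact ih.prod.of_measurePreserving (Fin.consEquivL ℝ fun _ : Fin (n + 1) => ℝ)
      (volume_preserving_piFinSuccAbove (fun _ => ℝ) 0)
      (MeasurableEquiv.piFinSuccAbove (fun _ => ℝ) 0).measurableEmbedding

theorem multiplicativeBrunnMinkowski_euclideanSpace (n : ℕ) :
    MultiplicativeBrunnMinkowski (EuclideanSpace ℝ (Fin n)) :=
  (multiplicativeBrunnMinkowski_pi n).of_measurePreserving
    (EuclideanSpace.equiv (Fin n) ℝ).symm (PiLp.volume_preserving_ofLp (Fin n))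
    (MeasurableEquiv.toLp 2 (Fin n → ℝ)).symm.measurableEmbedding

theorem pow_sub_pow_le_pow_sub_pow_of_sq_sub_sq_eq {U V u v : ℝ} (hv : 0 ≤ v) (hvu : v ≤ u)
    (hvV : v ≤ V) (huU : u ≤ U) (hVU : V ≤ U) (h : U ^ 2 - V ^ 2 = u ^ 2 - v ^ 2) {n : ℕ}
    (hn : 2 ≤ n) : u ^ n - v ^ n ≤ U ^ n - V ^ n := by
  have hD : 0 ≤ U ^ 2 - V ^ 2 := by nlinarith
  induction n using Nat.strong_induction_on with
  | _ n ih =>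
    match n, hn with
    | 2, _ => exact h.ge
    | 3, _ =>
      rcases hvu.eq_or_lt with rfl | hlt
      · have : (U - V) * (U + V) = 0 := by linarith
        rcases mul_eq_zero.1 this with h0 | h0
        · have : U = V := by linarith
          simp [this]
        · have hU : U = 0 := by linarith
          have hV : V = 0 := by linarith
          simp [hU, hV]
      set s := U + V with hs
      set d := U - V with hd
      set s' := u + v with hs'
      set d' := u - v with hd'
      have hd'0 : 0 < d' := by linarith
      have hd0 : 0 ≤ d := by linarith
      have hss : s' ≤ s := by linarith
      have hds' : d' ≤ s' := by linarith
      have hsd : s * d = s' * d' := by linarith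
      have hs0 : 0 < s := by linarith
      have hdd : d ≤ d' := by
        by_contra! hc
        nlinarith [mul_lt_mul_of_pos_left hc hs0]
      have hE : (s - s') * d' = s * (d' - d) := by linarith
      have hA : d' * (d' ^ 2 + d * d' + d ^ 2) ≤ 3 * (s ^ 2 * d) := by
        have h1 : s ^ 2 * d = s * s' * d' := by rw [pow_two, mul_assoc, hsd]; ring
        have h2 : d' * d' ≤ s * s' := mul_le_mul (by linarith) hds' hd'0.le hs0.le
        nlinarith [mul_le_mul_of_nonneg_right h2 hd'0.le, mul_le_mul_of_nonneg_right hdd hd0,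
          mul_le_mul_of_nonneg_right hdd hd'0.le]
      have hB : 0 ≤ d' * (3 * (s * d) * (s - s') - (d' ^ 3 - d ^ 3)) := by
        have : d' * (3 * (s * d) * (s - s') - (d' ^ 3 - d ^ 3))
            = (d' - d) * (3 * (s ^ 2 * d) - d' * (d' ^ 2 + d * d' + d ^ 2)) := by
          linear_combination (3 * s * d) * hE
        rw [this]
        exact mul_nonneg (by linarith) (by linarith)
      have hC := nonneg_of_mul_nonneg_right hB hd'0
      have e1 : U ^ 3 - V ^ 3 = (3 * (s * d) * s + d ^ 3) / 4 := by rw [hs, hd]; ring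
      have e2 : u ^ 3 - v ^ 3 = (3 * (s' * d') * s' + d' ^ 3) / 4 := by rw [hs', hd']; ring
      rw [e1, e2, ← hsd]
      linarith
    | m + 4, _ =>
      have ih' := ih (m + 2) (by omega) (by omega)
      have e : ∀ x y : ℝ, x ^ (m + 4) - y ^ (m + 4)
          = x ^ 2 * (x ^ (m + 2) - y ^ (m + 2)) + y ^ (m + 2) * (x ^ 2 - y ^ 2) := by
        intro x y; ring
      rw [e, e U V, ← h]
      have h0 : 0 ≤ u ^ (m + 2) - v ^ (m + 2) := sub_nonneg.2 (by gcongr)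
      have : 0 ≤ u := hv.trans hvu
      gcongr

theorem add_pow_sub_sub_pow_eq_sum (n : ℕ) (x y : ℝ) :
    (x + y) ^ n - (x - y) ^ n = ∑ j ∈ Finset.range (n + 1),
      x ^ j * y ^ (n - j) * (n.choose j * (1 - (-1) ^ (n - j))) := by
  rw [sub_eq_add_neg x y, add_pow, add_pow, ← Finset.sum_sub_distrib]
  refine Finset.sum_congr rfl fun j _ => ?_
  rw [neg_pow y]; ring

theorem sq_mul_add_pow_sub_sub_pow_le {l m : ℝ} (hl : 0 ≤ l) (hm : 0 ≤ m) (p q : ℝ) (n : ℕ) :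
    ((p * q) ^ n * ((l + m) ^ n - (l - m) ^ n)) ^ 2 ≤
      ((l * p ^ 2 + m * q ^ 2) ^ n - (l * p ^ 2 - m * q ^ 2) ^ n) *
      ((l * q ^ 2 + m * p ^ 2) ^ n - (l * q ^ 2 - m * p ^ 2) ^ n) := by
  rw [add_pow_sub_sub_pow_eq_sum n, add_pow_sub_sub_pow_eq_sum n, add_pow_sub_sub_pow_eq_sum n,
    Finset.mul_sum]
  have hc : ∀ j, 0 ≤ (n.choose j : ℝ) * (1 - (-1) ^ (n - j)) := fun j => by
    refine mul_nonneg (by positivity) ?_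
    rcases neg_one_pow_eq_or ℝ (n - j) with h | h <;> rw [h] <;> norm_num
  refine Finset.sum_sq_le_sum_mul_sum_of_sq_le_mul _ (fun j _ => mul_nonneg (by positivity) (hc j))
    (fun j _ => mul_nonneg (by positivity) (hc j)) fun j hj => ?_
  have hj' : j ≤ n := by simpa [Nat.lt_succ_iff] using hj
  obtain ⟨i, rfl⟩ := Nat.exists_eq_add_of_le hj'
  rw [Nat.add_sub_cancel_left]
  exact le_of_eq (by ring)

theorem pow_mul_sq_le_mul_of_le {l m k t : ℝ} (hm : 0 ≤ m) (hml : m ≤ l) (ht : 0 ≤ t)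
    (htk : t ≤ k) {n : ℕ} (hn : 2 ≤ n) :
    (k * t) ^ n * ((l + m) ^ n - |l - m| ^ n) ^ 2 ≤
      ((l * k + m * t) ^ n - |l * k - m * t| ^ n) *
      ((l * t + m * k) ^ n - |l * t - m * k| ^ n) := by
  have hl : 0 ≤ l := hm.trans hml
  have hk : 0 ≤ k := ht.trans htk
  have hlm : m * t ≤ l * k := mul_le_mul hml htk ht hl
  obtain ⟨p, hp, rfl⟩ : ∃ p, 0 ≤ p ∧ p ^ 2 = k := ⟨√k, Real.sqrt_nonneg k, Real.sq_sqrt hk⟩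
  obtain ⟨q, hq, rfl⟩ : ∃ q, 0 ≤ q ∧ q ^ 2 = t := ⟨√t, Real.sqrt_nonneg t, Real.sq_sqrt ht⟩
  obtain ⟨a, ha, rfl⟩ : ∃ p, 0 ≤ p ∧ p ^ 2 = l := ⟨√l, Real.sqrt_nonneg l, Real.sq_sqrt hl⟩
  obtain ⟨b, hb, rfl⟩ : ∃ p, 0 ≤ p ∧ p ^ 2 = m := ⟨√m, Real.sqrt_nonneg m, Real.sq_sqrt hm⟩
  have e : (p ^ 2 * q ^ 2) ^ n * ((a ^ 2 + b ^ 2) ^ n - |a ^ 2 - b ^ 2| ^ n) ^ 2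
      = ((p * q) ^ n * ((a ^ 2 + b ^ 2) ^ n - (a ^ 2 - b ^ 2) ^ n)) ^ 2 := by
    rw [abs_of_nonneg (sub_nonneg.2 hml)]; ring
  rw [e, abs_of_nonneg (sub_nonneg.2 hlm)]
  rcases le_total (b ^ 2 * p ^ 2) (a ^ 2 * q ^ 2) with h | h
  · rw [abs_of_nonneg (sub_nonneg.2 h)]
    exact sq_mul_add_pow_sub_sub_pow_le hl hm p q n
  · rw [abs_of_nonpos (sub_nonpos.2 h)]
    have key := pow_sub_pow_le_pow_sub_pow_of_sq_sub_sq_eq (U := a * b * (p ^ 2 + q ^ 2))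
      (V := a * b * (p ^ 2 - q ^ 2)) (u := p * q * (a ^ 2 + b ^ 2)) (v := p * q * (a ^ 2 - b ^ 2))
      (mul_nonneg (by positivity) (by linarith))
      (mul_le_mul_of_nonneg_left (by linarith) (by positivity))
      (le_of_pow_le_pow_left₀ two_ne_zero (mul_nonneg (by positivity) (by linarith))
        (by nlinarith [mul_nonneg (sub_nonneg.2 hlm) (sub_nonneg.2 h)]))
      (le_of_pow_le_pow_left₀ two_ne_zero (by positivity)
        (by nlinarith [mul_nonneg (sub_nonneg.2 hlm) (sub_nonneg.2 h)]))
      (mul_le_mul_of_nonneg_left (by linarith) (by positivity)) (by ring) hn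
    have h0 : 0 ≤ (a ^ 2 + b ^ 2) ^ n - (a ^ 2 - b ^ 2) ^ n := by
      have : 0 ≤ a ^ 2 - b ^ 2 := by linarith
      refine sub_nonneg.2 (by gcongr; linarith)
    calc ((p * q) ^ n * ((a ^ 2 + b ^ 2) ^ n - (a ^ 2 - b ^ 2) ^ n)) ^ 2
        ≤ ((a * b) ^ n * ((p ^ 2 + q ^ 2) ^ n - (p ^ 2 - q ^ 2) ^ n)) ^ 2 := by
          refine pow_le_pow_left₀ (by positivity) ?_ 2
          rw [mul_sub, mul_sub, ← mul_pow, ← mul_pow, ← mul_pow, ← mul_pow]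
          exact key
      _ ≤ _ := sq_mul_add_pow_sub_sub_pow_le hk ht a b n
      _ = _ := by ring_nf

theorem pow_mul_sq_le_mul {l m k t : ℝ} (hl : 0 ≤ l) (hm : 0 ≤ m) (hk : 0 ≤ k) (ht : 0 ≤ t)
    {n : ℕ} (hn : 2 ≤ n) :
    (k * t) ^ n * ((l + m) ^ n - |l - m| ^ n) ^ 2 ≤
      ((l * k + m * t) ^ n - |l * k - m * t| ^ n) *
      ((l * t + m * k) ^ n - |l * t - m * k| ^ n) := by
  rcases le_total m l with h1 | h1 <;> rcases le_total t k with h2 | h2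
  · exact pow_mul_sq_le_mul_of_le hm h1 ht h2 hn
  · have := pow_mul_sq_le_mul_of_le hm h1 hk h2 hn
    rwa [mul_comm t k, mul_comm (_ - _) (_ - _)] at this
  · have := pow_mul_sq_le_mul_of_le hl h1 ht h2 hn
    rw [add_comm m l, abs_sub_comm m l, add_comm (m * k), abs_sub_comm (m * k),
      add_comm (m * t), abs_sub_comm (m * t)] at this
    linarith
  · have := pow_mul_sq_le_mul_of_le hl h1 hk h2 hn
    rw [mul_comm t k, add_comm m l, abs_sub_comm m l, add_comm (m * k), abs_sub_comm (m * k),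
      add_comm (m * t), abs_sub_comm (m * t)] at this
    linarith

/-- The **Brunn-Minkowski inequality** for compact sets, in terms of the radii `α` and `β` with
`volume A = α ^ n` and `volume B = β ^ n`. -/
theorem add_pow_le_volume_add {n : ℕ} {A B : Set (EuclideanSpace ℝ (Fin n))} (hA : IsCompact A)
    (hB : IsCompact B) (hA0 : A.Nonempty) (hB0 : B.Nonempty) {α β : ℝ} (hα : 0 ≤ α) (hβ : 0 ≤ β)
    (hAα : volume.real A = α ^ n) (hBβ : volume.real B = β ^ n) :
    (α + β) ^ n ≤ volume.real (A + B) := by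
  have hAB := (hA.add hB).measure_ne_top (μ := volume)
  rcases hα.eq_or_lt with rfl | hα
  · obtain ⟨x, hx⟩ := hA0
    rw [zero_add, ← hBβ, measureReal_def, ← measure_preimage_add volume (-x) B,
      ← measureReal_def, ← Set.image_add_left]
    refine measureReal_mono ?_ hAB
    rintro _ ⟨y, hy, rfl⟩
    exact Set.add_mem_add hx hy
  rcases hβ.eq_or_lt with rfl | hβ
  · obtain ⟨x, hx⟩ := hB0
    rw [add_zero, ← hAα, measureReal_def, ← measure_preimage_add_right volume (-x) A,
      ← measureReal_def, ← Set.image_add_right]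
    refine measureReal_mono ?_ hAB
    rintro _ ⟨y, hy, rfl⟩
    exact Set.add_mem_add hy hx
  have hsmul : ∀ (r : ℝ) (S : Set (EuclideanSpace ℝ (Fin n))), 0 < r →
      volume.real (r • S) = r ^ n * volume.real S := fun r S hr => by
    simp [measureReal_def, Measure.addHaar_smul_of_nonneg _ hr.le, hr.le]
  have hs : 0 < α + β := by positivity
  have key := multiplicativeBrunnMinkowski_euclideanSpace n (α⁻¹ • A) (β⁻¹ • B) (hA.smul _)
    (hB.smul _) hA0.smul_set hB0.smul_set (α / (α + β)) (β / (α + β)) (by positivity)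
    (by positivity) (by field_simp)
  have e1 : α / (α + β) * α⁻¹ = (α + β)⁻¹ := by field_simp
  have e2 : β / (α + β) * β⁻¹ = (α + β)⁻¹ := by field_simp
  rw [smul_smul, smul_smul, e1, e2, ← smul_add, hsmul _ _ (inv_pos.2 hα), hsmul _ _ (inv_pos.2 hβ),
    hsmul _ _ (inv_pos.2 hs), hAα, hBβ, ← mul_pow, ← mul_pow, inv_mul_cancel₀ hα.ne',
    inv_mul_cancel₀ hβ.ne', one_pow, Real.one_rpow, Real.one_rpow, one_mul, inv_pow,
    le_inv_mul_iff₀ (by positivity), mul_one] at key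
  exact key

theorem IsCompact.subset_or_subset_of_disjoint_frontier {E : Type*} [TopologicalSpace E]
    [T2Space E] [PreconnectedSpace E] [NoncompactSpace E] {C D : Set E} (hC : IsCompact C)
    (hD : IsCompact D) (hfC : IsPreconnected (frontier C)) (hfD : IsPreconnected (frontier D))
    (hdisj : Disjoint (frontier C) (frontier D)) (hCD : (C ∩ D).Nonempty) : C ⊆ D ∨ D ⊆ C := by
  have split : ∀ {S : Set E}, IsClosed S → ∀ x ∈ S, x ∈ interior S ∨ x ∈ frontier S := by
    intro S hS x hx
    rw [hS.frontier_eq]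
    by_cases h : x ∈ interior S
    exacts [.inl h, .inr ⟨hx, h⟩]
  have sep : ∀ {S T : Set E}, IsClosed T → IsPreconnected (frontier S) →
      Disjoint (frontier S) (frontier T) →
      frontier S ⊆ interior T ∨ frontier S ⊆ Tᶜ := by
    intro S T hT hS hST
    refine hS.subset_or_subset isOpen_interior hT.isOpen_compl
      (disjoint_compl_right.mono_left interior_subset) fun x hx => ?_
    by_cases hxT : x ∈ T
    · exact (split hT x hxT).elim .inl fun h => (hST.le_bot ⟨hx, h⟩).elim
    · exact .inr hxT
  have clopen : ∀ {S : Set E}, IsCompact S → IsOpen S → S = ∅ := by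
    intro S hS hSo
    rcases isClopen_iff.1 ⟨hS.isClosed, hSo⟩ with h | h
    · exact h
    · exact (noncompact_univ E (h ▸ hS)).elim
  have nested : ∀ {S T : Set E}, IsCompact S → IsClosed T → frontier S ⊆ interior T →
      frontier T ⊆ Sᶜ → S ⊆ T := by
    intro S T hS hT hST hTS
    have hopen : S \ interior T = interior S ∩ Tᶜ := by
      ext x
      constructor
      · rintro ⟨hx, hxT⟩
        refine ⟨(split hS.isClosed x hx).resolve_right fun h => hxT (hST h), fun h => ?_⟩
        exact (split hT x h).elim hxT fun h => hTS h hx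
      · rintro ⟨hx, hxT⟩
        exact ⟨interior_subset hx, fun h => hxT (interior_subset h)⟩
    have := clopen (hS.diff isOpen_interior) (hopen ▸ isOpen_interior.inter hT.isOpen_compl)
    exact (Set.sdiff_eq_empty.1 this).trans interior_subset
  rcases sep hD.isClosed hfC hdisj with h1 | h1 <;>
    rcases sep hC.isClosed hfD hdisj.symm with h2 | h2
  · have hopen : C ∪ D = interior C ∪ interior D := by
      refine (Set.union_subset ?_ ?_).antisymm
        (Set.union_subset_union interior_subset interior_subset)
      · exact fun x hx => (split hC.isClosed x hx).imp_right (@h1 x)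
      · exact fun x hx => (split hD.isClosed x hx).symm.imp_left (@h2 x)
    have := clopen (hC.union hD) (hopen ▸ isOpen_interior.union isOpen_interior)
    exact (hCD.mono (Set.inter_subset_left.trans Set.subset_union_left)).ne_empty this |>.elim
  · exact .inl (nested hC hD.isClosed h1 h2)
  · exact .inr (nested hD hC.isClosed h2 h1)
  · have hopen : C ∩ D = interior C ∩ interior D := by
      refine Set.Subset.antisymm ?_ (Set.inter_subset_inter interior_subset interior_subset)
      rintro x ⟨hxC, hxD⟩
      exact ⟨(split hC.isClosed x hxC).resolve_right fun h => h1 h hxD,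
        (split hD.isClosed x hxD).resolve_right fun h => h2 h hxC⟩
    exact (hCD.ne_empty (clopen (hC.inter hD)
      (hopen ▸ isOpen_interior.inter isOpen_interior))).elim

/-- The points `x` for which the reflected translate `x - C` lies inside `D`. -/
def reflectedTranslatesInside {E : Type*} [Sub E] (C D : Set E) : Set E := {x | ∀ c ∈ C, x - c ∈ D}

theorem isClosed_reflectedTranslatesInside {E : Type*} [TopologicalSpace E] [AddGroup E]
    [IsTopologicalAddGroup E] (C : Set E) {D : Set E} (hD : IsClosed D) :
    IsClosed (reflectedTranslatesInside C D) := by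
  have : reflectedTranslatesInside C D = ⋂ c ∈ C, (fun x => x - c) ⁻¹' D := by
    ext; simp [reflectedTranslatesInside]
  rw [this]
  exact isClosed_biInter fun c _ => hD.preimage (by fun_prop)

theorem isCompact_reflectedTranslatesInside {E : Type*} [TopologicalSpace E] [AddGroup E]
    [IsTopologicalAddGroup E] {C D : Set E} (hD : IsCompact D) (hDc : IsClosed D)
    (hC : C.Nonempty) : IsCompact (reflectedTranslatesInside C D) := by
  obtain ⟨c, hc⟩ := hC
  refine (hD.image (continuous_add_const c)).of_isClosed_subset
    (isClosed_reflectedTranslatesInside C hDc) fun x hx => ⟨x - c, hx c hc, by simp⟩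

theorem add_subset_frontier_add_frontier_union {E : Type*} [TopologicalSpace E] [AddCommGroup E]
    [IsTopologicalAddGroup E] [T2Space E] [PreconnectedSpace E] [NoncompactSpace E] {C D : Set E}
    (hC : IsCompact C) (hD : IsCompact D) (hfC : IsPreconnected (frontier C))
    (hfD : IsPreconnected (frontier D)) :
    C + D ⊆ frontier C + frontier D ∪
      (reflectedTranslatesInside C D ∪ reflectedTranslatesInside D C) := by
  rintro _ ⟨c, hc, d, hd, rfl⟩
  set x := c + d with hx
  let e := Homeomorph.subLeft x
  have hef : e '' frontier C = frontier (e '' C) := e.image_frontier C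
  by_cases hdisj : Disjoint (frontier (e '' C)) (frontier D)
  · right
    refine (IsCompact.subset_or_subset_of_disjoint_frontier (hC.image e.continuous) hD
      (hef ▸ hfC.image e e.continuous.continuousOn) hfD hdisj
      ⟨d, ⟨c, hc, by simp [e, hx]⟩, hd⟩).imp (fun h y hy => h ⟨y, hy, rfl⟩) fun h y hy => ?_
    obtain ⟨z, hz, hzy⟩ := h hy
    have : x - y = z := by rw [← hzy]; simp [e]
    rwa [this]
  · left
    rw [← hef, Set.not_disjoint_iff] at hdisj
    obtain ⟨_, ⟨y, hy, rfl⟩, hyD⟩ := hdisj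
    exact ⟨y, hy, _, hyD, by simp [e, hx]⟩

theorem volume_reflectedTranslatesInside_le {n : ℕ} (hn : n ≠ 0)
    {C D : Set (EuclideanSpace ℝ (Fin n))} (hC : IsCompact C) (hD : IsCompact D)
    (hC0 : C.Nonempty) {α β : ℝ} (hα : 0 ≤ α) (hβ : 0 ≤ β)
    (hCα : volume.real C = α ^ n) (hDβ : volume.real D = β ^ n) :
    volume.real (reflectedTranslatesInside C D) ≤ max (β - α) 0 ^ n := by
  rcases (reflectedTranslatesInside C D).eq_empty_or_nonempty with h | h
  · rw [h, measureReal_empty]; positivity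
  set ε := volume.real (reflectedTranslatesInside C D) ^ (n : ℝ)⁻¹ with hε
  have hε0 : 0 ≤ ε := by positivity
  have hεn : volume.real (reflectedTranslatesInside C D) = ε ^ n :=
    (Real.rpow_inv_natCast_pow measureReal_nonneg hn).symm
  have hneg : volume.real (-C) = α ^ n := by
    rw [measureReal_def, Measure.measure_neg, ← measureReal_def, hCα]
  have h1 := add_pow_le_volume_add (isCompact_reflectedTranslatesInside hD hD.isClosed hC0) hC.neg
    h hC0.neg hε0 hα hεn hneg
  have h2 : volume.real (reflectedTranslatesInside C D + -C) ≤ volume.real D := by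
    refine measureReal_mono ?_ hD.measure_ne_top
    rintro _ ⟨x, hx, c, hc, rfl⟩
    simpa using hx (-c) hc
  have h3 : ε + α ≤ β := le_of_pow_le_pow_left₀ hn hβ (by linarith)
  rw [hεn]
  gcongr
  exact le_max_of_le_left (by linarith)

theorem add_pow_sub_abs_sub_pow_le_volume_frontier_add {n : ℕ} (hn : n ≠ 0)
    {C D : Set (EuclideanSpace ℝ (Fin n))} (hC : IsCompact C) (hD : IsCompact D)
    (hC0 : C.Nonempty) (hD0 : D.Nonempty) (hfC : IsPreconnected (frontier C))
    (hfD : IsPreconnected (frontier D)) {α β : ℝ} (hα : 0 ≤ α) (hβ : 0 ≤ β)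
    (hCα : volume.real C = α ^ n) (hDβ : volume.real D = β ^ n) :
    (α + β) ^ n - |α - β| ^ n ≤ volume.real (frontier C + frontier D) := by
  have : Nonempty (Fin n) := Fin.pos_iff_nonempty.1 (Nat.pos_of_ne_zero hn)
  have : NoncompactSpace (EuclideanSpace ℝ (Fin n)) := NormedSpace.noncompactSpace ℝ _
  have hfC' : IsCompact (frontier C) := hC.of_isClosed_subset isClosed_frontier
    hC.isClosed.frontier_subset
  have hfD' : IsCompact (frontier D) := hD.of_isClosed_subset isClosed_frontier
    hD.isClosed.frontier_subset
  have h1 := add_pow_le_volume_add hC hD hC0 hD0 hα hβ hCα hDβ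
  have h2 : volume.real (C + D) ≤ volume.real (frontier C + frontier D) +
      (volume.real (reflectedTranslatesInside C D) +
        volume.real (reflectedTranslatesInside D C)) := by
    have hE := isCompact_reflectedTranslatesInside hD hD.isClosed hC0
    have hF := isCompact_reflectedTranslatesInside hC hC.isClosed hD0
    refine (measureReal_mono (add_subset_frontier_add_frontier_union hC hD hfC hfD)
      ((hfC'.add hfD').union (hE.union hF)).measure_ne_top).trans ?_
    exact (measureReal_union_le _ _).trans (by gcongr; exact measureReal_union_le _ _)
  have h3 := volume_reflectedTranslatesInside_le hn hC hD hC0 hα hβ hCα hDβ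
  have h4 := volume_reflectedTranslatesInside_le hn hD hC hD0 hβ hα hDβ hCα
  have h5 : max (β - α) 0 ^ n + max (α - β) 0 ^ n = |α - β| ^ n := by
    rcases le_total α β with h | h
    · rw [max_eq_left (by linarith), max_eq_right (by linarith), abs_of_nonpos (by linarith),
        zero_pow hn, add_zero, neg_sub]
    · rw [max_eq_right (by linarith), max_eq_left (by linarith), abs_of_nonneg (by linarith),
        zero_pow hn, zero_add]
  linarith

theorem smul_frontier_add_smul_frontier_volume_ge {n : ℕ} (hn : n ≠ 0)
    {K T : Set (EuclideanSpace ℝ (Fin n))} (hK : IsCompact K) (hT : IsCompact T)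
    (hbK : IsConnected (frontier K)) (hbT : IsConnected (frontier T)) {l m : ℝ} (hl : 0 < l)
    (hm : 0 < m) {k t : ℝ} (hk : 0 ≤ k) (ht : 0 ≤ t) (hKk : volume.real K = k ^ n)
    (hTt : volume.real T = t ^ n) :
    (l * k + m * t) ^ n - |l * k - m * t| ^ n ≤
      volume.real (l • frontier K + m • frontier T) := by
  have hfr : ∀ (r : ℝ) (S : Set (EuclideanSpace ℝ (Fin n))), 0 < r →
      frontier (r • S) = r • frontier S := fun r S hr =>
    ((Homeomorph.smulOfNeZero r hr.ne').image_frontier S).symm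
  have hvol : ∀ (r : ℝ) (S : Set (EuclideanSpace ℝ (Fin n))) (s : ℝ), 0 < r →
      volume.real S = s ^ n → volume.real (r • S) = (r * s) ^ n := fun r S s hr hS => by
    rw [mul_pow, ← hS]
    simp [measureReal_def, Measure.addHaar_smul_of_nonneg _ hr.le, hr.le]
  have hconn : ∀ (r : ℝ) (S : Set (EuclideanSpace ℝ (Fin n))), 0 < r →
      IsConnected (frontier S) → IsPreconnected (frontier (r • S)) := fun r S hr hS => by
    rw [hfr r S hr]
    exact hS.isPreconnected.image _ (continuous_const_smul r).continuousOn
  rw [← hfr l K hl, ← hfr m T hm]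
  exact add_pow_sub_abs_sub_pow_le_volume_frontier_add hn (hK.smul l) (hT.smul m)
    (hbK.nonempty.mono hK.isClosed.frontier_subset).smul_set
    (hbT.nonempty.mono hT.isClosed.frontier_subset).smul_set
    (hconn l K hl hbK) (hconn m T hm hbT) (by positivity) (by positivity)
    (hvol l K k hl hKk) (hvol m T t hm hTt)

theorem boundary_BBM_inequality (n : ℕ) (hn : 2 ≤ n)
    (K T : Set (EuclideanSpace ℝ (Fin n)))
    (hK : IsCompact K) (hT : IsCompact T)
    (hbK : IsConnected (frontier K)) (hbT : IsConnected (frontier T))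
    (l : ℝ) (hl0 : 0 < l) (hl1 : l < 1) :
    (volume (l • frontier K + (1 - l) • frontier T)).toReal *
      (volume (l • frontier T + (1 - l) • frontier K)).toReal ≥
    (volume K).toReal * (volume T).toReal * (1 - |1 - 2*l| ^ n) ^ 2 := by
  have hn0 : n ≠ 0 := by omega
  have hm0 : 0 < 1 - l := by linarith
  have hroot : ∀ S : Set (EuclideanSpace ℝ (Fin n)), ∃ s : ℝ, 0 ≤ s ∧ volume.real S = s ^ n :=
    fun S => ⟨volume.real S ^ (n : ℝ)⁻¹, by positivity,
      (Real.rpow_inv_natCast_pow measureReal_nonneg hn0).symm⟩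
  obtain ⟨k, hk, hKk⟩ := hroot K
  obtain ⟨t, ht, hTt⟩ := hroot T
  have h1 := smul_frontier_add_smul_frontier_volume_ge hn0 hK hT hbK hbT hl0 hm0 hk ht hKk hTt
  have h2 := smul_frontier_add_smul_frontier_volume_ge hn0 hT hK hbT hbK hl0 hm0 ht hk hTt hKk
  have h3 := pow_mul_sq_le_mul hl0.le hm0.le hk ht hn
  have h4 : 0 ≤ (l * t + (1 - l) * k) ^ n - |l * t - (1 - l) * k| ^ n := by
    refine sub_nonneg.2 (pow_le_pow_left₀ (abs_nonneg _) ?_ n)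
    have : 0 ≤ l * t := by positivity
    have : 0 ≤ (1 - l) * k := by positivity
    rw [abs_le]; constructor <;> linarith
  have e : (l + (1 - l)) ^ n - |l - (1 - l)| ^ n = 1 - |1 - 2 * l| ^ n := by
    rw [add_sub_cancel, one_pow, abs_sub_comm, show 1 - l - l = 1 - 2 * l by ring]
  rw [e, mul_pow, ← hKk, ← hTt] at h3
  exact h3.trans (mul_le_mul h1 h2 h4 measureReal_nonneg)
end
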